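/- arXiv:1902.09025 — 9 statements merged into one kernel-verified Lean document; each statement's English description precedes it below -/
import Mathlib

section
/- Let H_0, H_1, ..., H_{n-1} be real Hilbert spaces, set H_n = H_0, let G_i : H_0 -> H_i be bounded linear operators for i = 1, ..., n-1, and let G_n be the identity on H_0. Let T_1, ..., T_n be monotone set-valued operators with T_i acting on H_i. Suppose that for each i = 1, ..., n the pair (x_i, y_i) in H_i x H_i satisfies y_i in T_i x_i. Then for every point (z, w_1, ..., w_{n-1}) in the extended solution set S, the separator value phi(z, w_1, ..., w_{n-1}) = sum_{i=1}^n <G_i z - x_i, y_i - w_i> is at most 0, where w_n denotes -sum_{i=1}^{n-1} G_i^* w_i. -/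
open scoped InnerProductSpace

/-- if `(xᵢ, yᵢ) ∈ gra Tᵢ` for each monotone operator `Tᵢ`, then the separator
value `φ(z, w₁, …, w_{n-1}) = ∑ᵢ ⟪Gᵢ z - xᵢ, yᵢ - wᵢ⟫` is nonpositive on the extended
solution set `S`.  Here the operators `T₁, …, T_{n-1}` act on the spaces `H₁, …, H_{n-1}`
(indexed by `Fin m` with `m = n - 1`), `Tn` acts on `H₀ = H_n`, and `G_n` is the identity. -/
theorem separator_nonpos_on_solution_set
    {H0 : Type*} [NormedAddCommGroup H0] [InnerProductSpace ℝ H0] [CompleteSpace H0]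
    {m : ℕ} {H : Fin m → Type*} [∀ i, NormedAddCommGroup (H i)]
    [∀ i, InnerProductSpace ℝ (H i)] [∀ i, CompleteSpace (H i)]
    (G : ∀ i, H0 →L[ℝ] H i)
    (T : ∀ i, H i → Set (H i)) (Tn : H0 → Set H0)
    (hT : ∀ i, ∀ x y a b, a ∈ T i x → b ∈ T i y → 0 ≤ ⟪a - b, x - y⟫_ℝ)
    (hTn : ∀ x y a b, a ∈ Tn x → b ∈ Tn y → 0 ≤ ⟪a - b, x - y⟫_ℝ)
    (x : ∀ i, H i) (y : ∀ i, H i) (xn yn : H0)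
    (hxy : ∀ i, y i ∈ T i (x i)) (hxyn : yn ∈ Tn xn)
    (z : H0) (w : ∀ i, H i)
    (hw : ∀ i, w i ∈ T i (G i z))
    (hwn : -∑ i, ContinuousLinearMap.adjoint (G i) (w i) ∈ Tn z) :
    (∑ i, ⟪G i z - x i, y i - w i⟫_ℝ)
      + ⟪z - xn, yn - (-∑ i, ContinuousLinearMap.adjoint (G i) (w i))⟫_ℝ ≤ 0 := by
  have h1 : ∑ i, ⟪G i z - x i, y i - w i⟫_ℝ ≤ 0 := by
    apply Finset.sum_nonpos
    intro i _
    have h := hT i _ _ _ _ (hw i) (hxy i)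
    rw [← neg_sub (y i) (w i), inner_neg_left, real_inner_comm] at h
    linarith
  have h2 := hTn _ _ _ _ hwn hxyn
  rw [← neg_sub yn, inner_neg_left, real_inner_comm] at h2
  linarith
end

section
/- Let H_0, H_1, ..., H_{n-1} be real Hilbert spaces, set H_n = H_0, let G_i : H_0 -> H_i be bounded linear for i = 1, ..., n-1, with G_n the identity. For each i = 1, ..., n let A_i be a maximal monotone set-valued operator on H_i, and let B_i : H_i -> H_i be defined on all of H_i and either L_i^{-1}-cocoercive with L_i > 0, or constant. Set T_i = A_i + B_i. Then the extended solution set S = {(z, w_1, ..., w_{n-1}) : w_i in T_i(G_i z) for i = 1, ..., n-1 and -sum_{i=1}^{n-1} G_i^* w_i in T_n(z)} is a closed and convex subset of H_0 x H_1 x ... x H_{n-1}. -/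
open scoped InnerProductSpace

section helpers
variable {E : Type*} [NormedAddCommGroup E] [InnerProductSpace ℝ E]

/-- `B` is cocoercive or constant. -/
def CocoOrConst (B : E → E) : Prop :=
  (∃ L : ℝ, 0 < L ∧ ∀ x y, (1/L) * ‖B x - B y‖^2 ≤ ⟪B x - B y, x - y⟫_ℝ) ∨ (∃ v, ∀ x, B x = v)

/-- A constant operator is also cocoercive. -/
lemma CocoOrConst.coco {B : E → E} (hB : CocoOrConst B) :
    ∃ L : ℝ, 0 < L ∧ ∀ x y, (1/L) * ‖B x - B y‖^2 ≤ ⟪B x - B y, x - y⟫_ℝ := by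
  rcases hB with h | ⟨v, hv⟩
  · exact h
  · exact ⟨1, one_pos, fun x y => by simp [hv]⟩

lemma CocoOrConst.continuous {B : E → E} (hB : CocoOrConst B) : Continuous B := by
  obtain ⟨L, hL, h⟩ := hB.coco
  refine (LipschitzWith.of_dist_le_mul (K := ⟨L, hL.le⟩) fun x y => ?_).continuous
  rw [dist_eq_norm, dist_eq_norm]
  change ‖B x - B y‖ ≤ L * ‖x - y‖
  have h1 := (h x y).trans (real_inner_le_norm _ _)
  rw [one_div, inv_mul_le_iff₀ hL] at h1
  by_contra! hc
  have : 0 < ‖B x - B y‖ := lt_of_le_of_lt (by positivity) hc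
  nlinarith

lemma graph_closed {A : E → Set E} {B : E → E}
    (hmono : ∀ x y a b, a ∈ A x → b ∈ A y → 0 ≤ ⟪a - b, x - y⟫_ℝ)
    (hmax : ∀ x u, (∀ y v, v ∈ A y → 0 ≤ ⟪u - v, x - y⟫_ℝ) → u ∈ A x)
    (hB : CocoOrConst B) : IsClosed {p : E × E | ∃ a ∈ A p.1, p.2 = a + B p.1} := by
  have hc := hB.continuous
  have : {p : E × E | ∃ a ∈ A p.1, p.2 = a + B p.1} =
      ⋂ (y : E) (v : E) (_ : v ∈ A y), {p : E × E | 0 ≤ ⟪p.2 - B p.1 - v, p.1 - y⟫_ℝ} := by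
    ext ⟨x, w⟩
    simp only [Set.mem_ofPred_eq, Set.mem_iInter]
    constructor
    · rintro ⟨a, ha, rfl⟩ y v hv
      simpa using hmono x y a v ha hv
    · intro h
      exact ⟨w - B x, hmax _ _ h, by simp⟩
  rw [this]
  refine isClosed_iInter fun y => isClosed_iInter fun v => isClosed_iInter fun _ => ?_
  exact isClosed_le continuous_const (by fun_prop)

lemma T_mono {A : E → Set E} {B : E → E}
    (hmono : ∀ x y a b, a ∈ A x → b ∈ A y → 0 ≤ ⟪a - b, x - y⟫_ℝ)
    (hB : CocoOrConst B) {x y u v : E} (hu : ∃ a ∈ A x, u = a + B x)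
    (hv : ∃ a ∈ A y, v = a + B y) : 0 ≤ ⟪u - v, x - y⟫_ℝ := by
  obtain ⟨a, ha, rfl⟩ := hu
  obtain ⟨b, hb, rfl⟩ := hv
  obtain ⟨L, hL, h⟩ := hB.coco
  have h1 := hmono x y a b ha hb
  have h2 : 0 ≤ ⟪B x - B y, x - y⟫_ℝ := le_trans (by positivity) (h x y)
  rw [add_sub_add_comm, inner_add_left]
  exact add_nonneg h1 h2

lemma T_convex {A : E → Set E} {B : E → E}
    (hmono : ∀ x y a b, a ∈ A x → b ∈ A y → 0 ≤ ⟪a - b, x - y⟫_ℝ)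
    (hmax : ∀ x u, (∀ y v, v ∈ A y → 0 ≤ ⟪u - v, x - y⟫_ℝ) → u ∈ A x)
    (hB : CocoOrConst B) {x y u v : E} (hu : ∃ a ∈ A x, u = a + B x)
    (hv : ∃ a ∈ A y, v = a + B y) (h0 : ⟪u - v, x - y⟫_ℝ = 0) {s t : ℝ}
    (hs : 0 ≤ s) (ht : 0 ≤ t) (hst : s + t = 1) :
    ∃ a ∈ A (s • x + t • y), s • u + t • v = a + B (s • x + t • y) := by
  obtain ⟨a, ha, rfl⟩ := hu
  obtain ⟨b, hb, rfl⟩ := hv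
  obtain ⟨L, hL, h⟩ := hB.coco
  have hL' : 0 < 1 / L := by positivity
  have h1 := hmono x y a b ha hb
  have h2 := h x y
  have h2' : 0 ≤ (1/L) * ‖B x - B y‖^2 := by positivity
  rw [add_sub_add_comm, inner_add_left] at h0
  have ha0 : ⟪a - b, x - y⟫_ℝ = 0 := by linarith
  have key : ∀ c : E, (1/L) * ‖c‖^2 ≤ 0 → c = 0 := by
    intro c hc
    have : ‖c‖^2 ≤ 0 := by
      by_contra! hh
      have := mul_pos hL' hh
      linarith
    exact norm_eq_zero.1 (pow_eq_zero_iff (two_ne_zero) |>.1 (le_antisymm this (by positivity)))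
  have hBxy : B x = B y := sub_eq_zero.1 (key _ (by linarith))
  obtain rfl : s = 1 - t := by linarith
  have hBt : B ((1 - t) • x + t • y) = B y := by
    have e1 := h ((1 - t) • x + t • y) x
    have e2 := h ((1 - t) • x + t • y) y
    rw [hBxy] at e1
    have d1 : (1 - t) • x + t • y - x = (-t) • (x - y) := by module
    have d2 : (1 - t) • x + t • y - y = (1 - t) • (x - y) := by module
    rw [d1, inner_smul_right] at e1
    rw [d2, inner_smul_right] at e2
    refine sub_eq_zero.1 (key _ ?_)
    have f1 := mul_le_mul_of_nonneg_left e1 hs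
    have f2 := mul_le_mul_of_nonneg_left e2 ht
    linarith
  refine ⟨(1 - t) • a + t • b, hmax _ _ fun z v hv => ?_, ?_⟩
  · have g1 := mul_nonneg hs (hmono x z a v ha hv)
    have g2 := mul_nonneg ht (hmono y z b v hb hv)
    have : ⟪(1 - t) • a + t • b - v, (1 - t) • x + t • y - z⟫_ℝ =
        (1 - t) * ⟪a - v, x - z⟫_ℝ + t * ⟪b - v, y - z⟫_ℝ
          - t * (1 - t) * ⟪a - b, x - y⟫_ℝ := by
      simp only [inner_sub_left, inner_sub_right, inner_add_left, inner_add_right,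
        real_inner_smul_left, real_inner_smul_right]
      ring
    rw [this, ha0]
    linarith
  · rw [hBt, hBxy]
    module

end helpers

/-- with `Tᵢ = Aᵢ + Bᵢ` where each `Aᵢ` is maximal monotone and each `Bᵢ` is
everywhere defined and either `Lᵢ⁻¹`-cocoercive (`Lᵢ > 0`) or constant, the extended
solution set
`S = {(z, w) : wᵢ ∈ Tᵢ(Gᵢ z) for i = 1, …, n-1, and -∑ᵢ Gᵢ* wᵢ ∈ T_n(z)}`
is a closed convex subset of the product space `H₀ × H₁ × ⋯ × H_{n-1}`. -/
theorem extended_solution_set_closed_convex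
    {H0 : Type*} [NormedAddCommGroup H0] [InnerProductSpace ℝ H0] [CompleteSpace H0]
    {m : ℕ} {H : Fin m → Type*} [∀ i, NormedAddCommGroup (H i)]
    [∀ i, InnerProductSpace ℝ (H i)] [∀ i, CompleteSpace (H i)]
    (G : ∀ i, H0 →L[ℝ] H i)
    (A : ∀ i, H i → Set (H i)) (An : H0 → Set H0)
    (B : ∀ i, H i → H i) (Bn : H0 → H0)
    -- each Aᵢ is monotone
    (hAmono : ∀ i, ∀ x y a b, a ∈ A i x → b ∈ A i y → 0 ≤ ⟪a - b, x - y⟫_ℝ)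
    (hAnmono : ∀ x y a b, a ∈ An x → b ∈ An y → 0 ≤ ⟪a - b, x - y⟫_ℝ)
    -- each Aᵢ is maximal: any point monotonically related to the graph lies in the graph
    (hAmax : ∀ i, ∀ x u, (∀ y v, v ∈ A i y → 0 ≤ ⟪u - v, x - y⟫_ℝ) → u ∈ A i x)
    (hAnmax : ∀ x u, (∀ y v, v ∈ An y → 0 ≤ ⟪u - v, x - y⟫_ℝ) → u ∈ An x)
    -- each Bᵢ is either Lᵢ⁻¹-cocoercive with Lᵢ > 0, or constant
    (hB : ∀ i, (∃ L : ℝ, 0 < L ∧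
            ∀ x y, (1/L) * ‖B i x - B i y‖^2 ≤ ⟪B i x - B i y, x - y⟫_ℝ)
          ∨ (∃ v, ∀ x, B i x = v))
    (hBn : (∃ L : ℝ, 0 < L ∧
            ∀ x y, (1/L) * ‖Bn x - Bn y‖^2 ≤ ⟪Bn x - Bn y, x - y⟫_ℝ)
          ∨ (∃ v, ∀ x, Bn x = v)) :
    IsClosed {p : H0 × (∀ i, H i) |
        (∀ i, ∃ a ∈ A i (G i p.1), p.2 i = a + B i (G i p.1)) ∧
        (∃ a ∈ An p.1,
          -∑ i, ContinuousLinearMap.adjoint (G i) (p.2 i) = a + Bn p.1)} ∧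
    Convex ℝ {p : H0 × (∀ i, H i) |
        (∀ i, ∃ a ∈ A i (G i p.1), p.2 i = a + B i (G i p.1)) ∧
        (∃ a ∈ An p.1,
          -∑ i, ContinuousLinearMap.adjoint (G i) (p.2 i) = a + Bn p.1)} := by
  constructor
  · have e : ∀ i, IsClosed {p : H0 × (∀ i, H i) |
        ∃ a ∈ A i (G i p.1), p.2 i = a + B i (G i p.1)} := fun i =>
      (graph_closed (hAmono i) (hAmax i) (hB i)).preimage
        (f := fun p : H0 × (∀ i, H i) => (G i p.1, p.2 i)) (by fun_prop)
    have en : IsClosed {p : H0 × (∀ i, H i) | ∃ a ∈ An p.1,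
          -∑ i, ContinuousLinearMap.adjoint (G i) (p.2 i) = a + Bn p.1} :=
      (graph_closed hAnmono hAnmax hBn).preimage
        (f := fun p : H0 × (∀ i, H i) =>
          (p.1, -∑ i, ContinuousLinearMap.adjoint (G i) (p.2 i))) (by fun_prop)
    rw [Set.ofPred_and, Set.ofPred_forall]
    exact (isClosed_iInter e).inter en
  · rintro ⟨z, w⟩ ⟨hp, hpn⟩ ⟨z', w'⟩ ⟨hq, hqn⟩ s t hs ht hst
    dsimp only at hp hpn hq hqn
    have hi : ∀ i, 0 ≤ ⟪w i - w' i, G i z - G i z'⟫_ℝ := fun i =>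
      T_mono (hAmono i) (hB i) (hp i) (hq i)
    have hn := T_mono hAnmono hBn hpn hqn
    have hsum : ⟪-∑ i, ContinuousLinearMap.adjoint (G i) (w i) -
        -∑ i, ContinuousLinearMap.adjoint (G i) (w' i), z - z'⟫_ℝ =
        -∑ i, ⟪w i - w' i, G i z - G i z'⟫_ℝ := by
      have : -∑ i, ContinuousLinearMap.adjoint (G i) (w i) -
        -∑ i, ContinuousLinearMap.adjoint (G i) (w' i) =
          -∑ i, ContinuousLinearMap.adjoint (G i) (w i - w' i) := by
        simp only [map_sub, Finset.sum_sub_distrib]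
        abel
      rw [this, inner_neg_left, sum_inner]
      simp only [ContinuousLinearMap.adjoint_inner_left]
      simp only [map_sub]
    have hs0 : ∑ i, ⟪w i - w' i, G i z - G i z'⟫_ℝ = 0 :=
      le_antisymm (by linarith) (Finset.sum_nonneg fun i _ => hi i)
    have hi0 := (Finset.sum_eq_zero_iff_of_nonneg (fun i _ => hi i)).1 hs0
    refine ⟨fun i => ?_, ?_⟩
    · have := T_convex (hAmono i) (hAmax i) (hB i) (hp i) (hq i)
        (hi0 i (Finset.mem_univ i)) hs ht hst
      simpa using this
    · have := T_convex hAnmono hAnmax hBn hpn hqn (by rw [hsum, hs0, neg_zero]) hs ht hst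
      have e : -∑ i, ContinuousLinearMap.adjoint (G i) ((s • w + t • w') i) =
          s • (-∑ i, ContinuousLinearMap.adjoint (G i) (w i)) +
          t • (-∑ i, ContinuousLinearMap.adjoint (G i) (w' i)) := by
        simp only [Pi.add_apply, Pi.smul_apply, map_add, map_smul, Finset.sum_add_distrib,
          smul_neg, Finset.smul_sum]
        abel
      rw [← e] at this
      exact this
end

section
/- Let H be a real Hilbert space, let S be a nonempty subset of H, and for every k >= 1 let C_k be a closed convex subset of H with S contained in C_k. Let p^1 in H and define p^{k+1} to be the metric projection of p^k onto C_k for every k >= 1. Then the sequence {p^k} is bounded, and ||p^k - p^{k+1}|| -> 0 as k -> infinity. -/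
/-- Fejér-monotone projections.  If `S` is a nonempty subset of a real Hilbert
space, each `C_k` (for `k ≥ 1`) is closed, convex and contains `S`, and `p^{k+1}` is the
metric projection of `p^k` onto `C_k` (characterized as the nearest point of `C_k` to
`p^k`), then the sequence `{p^k}` is bounded and `‖p^k - p^{k+1}‖ → 0`. -/
theorem fejer_projection_bounded_and_successive_to_zero
    {H : Type*} [NormedAddCommGroup H] [InnerProductSpace ℝ H] [CompleteSpace H]
    (S : Set H) (hS : S.Nonempty)
    (C : ℕ → Set H)
    (hCclosed : ∀ k ≥ 1, IsClosed (C k))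
    (hCconvex : ∀ k ≥ 1, Convex ℝ (C k))
    (hSC : ∀ k ≥ 1, S ⊆ C k)
    (p : ℕ → H)
    (hmem : ∀ k ≥ 1, p (k + 1) ∈ C k)
    (hnearest : ∀ k ≥ 1, ∀ q ∈ C k, ‖p k - p (k + 1)‖ ≤ ‖p k - q‖) :
    (∃ M : ℝ, ∀ k ≥ 1, ‖p k‖ ≤ M) ∧
      Filter.Tendsto (fun k => ‖p k - p (k + 1)‖) Filter.atTop (nhds 0) := by
  obtain ⟨s, hs⟩ := hS
  have key : ∀ k ≥ 1, ‖p (k + 1) - s‖ ^ 2 + ‖p k - p (k + 1)‖ ^ 2 ≤ ‖p k - s‖ ^ 2 := by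
    intro k hk
    have hinf : ‖p k - p (k + 1)‖ = ⨅ w : C k, ‖p k - w‖ := by
      have : Nonempty (C k) := ⟨⟨_, hmem k hk⟩⟩
      apply le_antisymm
      · exact le_ciInf fun w => hnearest k hk w w.2
      · exact ciInf_le ⟨0, by rintro _ ⟨w, rfl⟩; exact norm_nonneg _⟩
          (⟨_, hmem k hk⟩ : C k)
    have h := (norm_eq_iInf_iff_real_inner_le_zero (hCconvex k hk) (hmem k hk)).1 hinf s
      (hSC k hk hs)
    have e := norm_sub_sq_real (p k - p (k + 1)) (s - p (k + 1))
    rw [sub_sub_sub_cancel_right] at e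
    rw [norm_sub_rev (p (k + 1)) s]
    linarith
  have anti : Antitone (fun n => ‖p (n + 1) - s‖ ^ 2) := by
    apply antitone_nat_of_succ_le
    intro n
    have := key (n + 1) (by omega)
    have := sq_nonneg ‖p (n + 1) - p (n + 1 + 1)‖
    linarith
  constructor
  · refine ⟨‖p 1 - s‖ + ‖s‖, fun k hk => ?_⟩
    obtain ⟨n, rfl⟩ : ∃ n, k = n + 1 := ⟨k - 1, by omega⟩
    have h1 : ‖p (n + 1) - s‖ ^ 2 ≤ ‖p 1 - s‖ ^ 2 := by simpa using anti (Nat.zero_le n)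
    have h2 : ‖p (n + 1) - s‖ ≤ ‖p 1 - s‖ := by
      exact (sq_le_sq₀ (norm_nonneg _) (norm_nonneg _)).1 h1
    have h3 : ‖p (n + 1)‖ ≤ ‖p (n + 1) - s‖ + ‖s‖ := by
      simpa using norm_add_le (p (n + 1) - s) s
    linarith
  · rw [← Filter.tendsto_add_atTop_iff_nat 1]
    have hl := tendsto_atTop_ciInf anti
      ⟨0, by rintro _ ⟨w, rfl⟩; exact sq_nonneg _⟩
    have hd := hl.sub (hl.comp (Filter.tendsto_add_atTop_nat 1))
    rw [sub_self] at hd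
    have hsq : Filter.Tendsto (fun n => ‖p (n + 1) - p (n + 1 + 1)‖ ^ 2) Filter.atTop
        (nhds 0) := by
      refine squeeze_zero (fun n => sq_nonneg _) (fun n => ?_) hd
      have := key (n + 1) (by omega)
      simp only [Function.comp]
      linarith
    have h := hsq.sqrt
    simpa [Real.sqrt_sq (norm_nonneg _)] using h
end

section
/- Let H be a real Hilbert space, let S be a nonempty subset of H, and for every k >= 1 let g_k in H and c_k in R be such that S is contained in the halfspace C_k = {p in H : <g_k, p> + c_k <= 0}, and suppose there is M >= 0 with ||g_k|| <= M for all k. Let p^1 in H and define p^{k+1} to be the metric projection of p^k onto C_k for every k >= 1. Then limsup_{k -> infinity} (<g_k, p^k> + c_k) <= 0. -/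
open scoped InnerProductSpace

/-- projections onto halfspaces `C_k = {p : ⟪g_k, p⟫ + c_k ≤ 0}` which all
contain a nonempty set `S`, with uniformly bounded normals `‖g_k‖ ≤ M`.  If `p^{k+1}` is
the metric projection (nearest point) of `p^k` onto `C_k` for every `k ≥ 1`, then
`limsup_k (⟪g_k, p^k⟫ + c_k) ≤ 0`. -/
theorem limsup_separator_value_nonpos
    {H : Type*} [NormedAddCommGroup H] [InnerProductSpace ℝ H] [CompleteSpace H]
    (S : Set H) (hS : S.Nonempty)
    (g : ℕ → H) (c : ℕ → ℝ)
    (M : ℝ) (hM : 0 ≤ M) (hg : ∀ k ≥ 1, ‖g k‖ ≤ M)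
    (hSC : ∀ k ≥ 1, ∀ s ∈ S, ⟪g k, s⟫_ℝ + c k ≤ 0)
    (p : ℕ → H)
    (hmem : ∀ k ≥ 1, ⟪g k, p (k + 1)⟫_ℝ + c k ≤ 0)
    (hnearest : ∀ k ≥ 1, ∀ q : H, ⟪g k, q⟫_ℝ + c k ≤ 0 →
      ‖p k - p (k + 1)‖ ≤ ‖p k - q‖) :
    Filter.limsup (fun k => ⟪g k, p k⟫_ℝ + c k) Filter.atTop ≤ 0 := by
  obtain ⟨s, hs⟩ := hS
  have hvar : ∀ k ≥ 1, ⟪p k - p (k + 1), s - p (k + 1)⟫_ℝ ≤ 0 := by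
    intro k hk
    by_contra! hx
    set a := p k - p (k + 1) with ha
    set d := s - p (k + 1) with hd
    set x := ⟪a, d⟫_ℝ with hxdef
    have hD : 0 ≤ ‖d‖ ^ 2 := by positivity
    have hpos : 0 < x + ‖d‖ ^ 2 := by linarith
    obtain ⟨t, ht⟩ : ∃ t, t = x / (x + ‖d‖ ^ 2) := ⟨_, rfl⟩
    have ht0 : 0 < t := by rw [ht]; positivity
    have ht1 : t ≤ 1 := by rw [ht, div_le_one hpos]; linarith
    have htm : t * (x + ‖d‖ ^ 2) = x := by rw [ht]; field_simp
    have hq : ⟪g k, p (k + 1) + t • d⟫_ℝ + c k ≤ 0 := by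
      have h1 := hmem k hk
      have h2 := hSC k hk s hs
      rw [inner_add_right, inner_smul_right, hd, inner_sub_right]
      nlinarith
    have h := hnearest k hk _ hq
    have he : p k - (p (k + 1) + t • d) = a - t • d := by rw [ha]; abel
    rw [he] at h
    have h2 : ‖a‖ ^ 2 ≤ ‖a - t • d‖ ^ 2 := by gcongr
    rw [norm_sub_sq_real a (t • d), inner_smul_right, norm_smul, mul_pow, Real.norm_eq_abs, sq_abs,
      ← hxdef] at h2
    have h3 : t * (2 * x) ≤ t * (t * ‖d‖ ^ 2) := by nlinarith
    have h4 := le_of_mul_le_mul_left h3 ht0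
    nlinarith
  have hfej : ∀ k ≥ 1, ‖p k - p (k + 1)‖ ^ 2 ≤ ‖p k - s‖ ^ 2 - ‖p (k + 1) - s‖ ^ 2 := by
    intro k hk
    have h := hvar k hk
    have he : p k - s = (p k - p (k + 1)) - (s - p (k + 1)) := by abel
    rw [he, norm_sub_sq_real (p k - p (k + 1)) (s - p (k + 1)), norm_sub_rev (p (k + 1)) s]
    linarith
  have hanti : Antitone (fun k => ‖p (k + 1) - s‖ ^ 2) := by
    apply antitone_nat_of_succ_le
    intro k
    have := hfej (k + 1) (by omega)
    have h0 : 0 ≤ ‖p (k + 1) - p (k + 1 + 1)‖ ^ 2 := by positivity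
    linarith
  have hlim := tendsto_atTop_ciInf hanti
    ⟨0, by rintro _ ⟨k, rfl⟩; positivity⟩
  have hdiff := hlim.sub (hlim.comp (Filter.tendsto_add_atTop_nat 1))
  rw [sub_self] at hdiff
  have hev : ∀ ε > 0, ∀ᶠ k in Filter.atTop, ⟪g k, p k⟫_ℝ + c k ≤ ε := by
    intro ε hε
    have hδ : 0 < (ε / (M + 1)) ^ 2 := by positivity
    rw [← Filter.map_add_atTop_eq_nat 1, Filter.eventually_map]
    filter_upwards [hdiff.eventually (gt_mem_nhds hδ)] with k hk
    simp only [Function.comp] at hk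
    have h1 := hfej (k + 1) (by omega)
    have h2 : ‖p (k + 1) - p (k + 1 + 1)‖ ≤ ε / (M + 1) :=
      (sq_le_sq₀ (by positivity) (by positivity)).1 (by linarith)
    have h3 := real_inner_le_norm (g (k + 1)) (p (k + 1) - p (k + 1 + 1))
    rw [inner_sub_right] at h3
    have h4 := hmem (k + 1) (by omega)
    have h5 : ‖g (k + 1)‖ * ‖p (k + 1) - p (k + 1 + 1)‖ ≤ (M + 1) * (ε / (M + 1)) := by
      have := hg (k + 1) (by omega)
      gcongr
      linarith
    have h6 : (M + 1) * (ε / (M + 1)) = ε := by field_simp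
    linarith
  rw [Filter.limsup_eq]
  by_cases hb : BddBelow {a | ∀ᶠ k in Filter.atTop, ⟪g k, p k⟫_ℝ + c k ≤ a}
  · refine le_of_forall_pos_le_add fun ε hε => ?_
    rw [zero_add]
    exact csInf_le hb (hev ε hε)
  · rw [Real.sInf_of_not_bddBelow hb]
end

section
/- Let 0 <= tau < 1, and let {r_k}_{k >= 1} and {b_k}_{k >= 1} be sequences of real numbers such that b_k -> 0 and r_{k+1} >= tau * r_k + b_k for all k >= 1. Then liminf_{k -> infinity} r_k >= 0. -/
/-- if `0 ≤ τ < 1`, `b_k → 0`, and `r_{k+1} ≥ τ r_k + b_k` for all `k ≥ 1`,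
then `liminf_k r_k ≥ 0`. -/
theorem liminf_nonneg_of_quasi_ascent
    (τ : ℝ) (hτ0 : 0 ≤ τ) (hτ1 : τ < 1)
    (r b : ℕ → ℝ)
    (hb : Filter.Tendsto b Filter.atTop (nhds 0))
    (hrec : ∀ k ≥ 1, r (k + 1) ≥ τ * r k + b k) :
    0 ≤ Filter.liminf r Filter.atTop := by
  have key : ∀ ε > 0, ∀ᶠ n in Filter.atTop, -ε ≤ r n := by
    intro ε hε
    have hneg : -((1 - τ) * (ε / 2)) < 0 := by
      have : 0 < (1 - τ) * (ε / 2) := mul_pos (by linarith) (by linarith)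
      linarith
    obtain ⟨N, hN⟩ := Filter.eventually_atTop.1
      ((hb.eventually (lt_mem_nhds hneg)).and (Filter.eventually_ge_atTop 1))
    have hind : ∀ n : ℕ, τ ^ n * (r N + ε / 2) ≤ r (N + n) + ε / 2 := by
      intro n
      induction n with
      | zero => simp
      | succ n ih =>
        obtain ⟨h1, h2⟩ := hN (N + n) (by omega)
        have h3 := hrec (N + n) h2
        have h4 := mul_le_mul_of_nonneg_left ih hτ0
        rw [← add_assoc, pow_succ]
        nlinarith
    have ht : Filter.Tendsto (fun n : ℕ => τ ^ n * (r N + ε / 2)) Filter.atTop (nhds 0) := by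
      simpa using (tendsto_pow_atTop_nhds_zero_of_lt_one hτ0 hτ1).mul_const (r N + ε / 2)
    obtain ⟨M, hM⟩ := Filter.eventually_atTop.1
      (ht.eventually (lt_mem_nhds (show -(ε / 2) < 0 by linarith)))
    refine Filter.eventually_atTop.2 ⟨N + M, fun k hk => ?_⟩
    obtain ⟨m, rfl⟩ := Nat.exists_eq_add_of_le hk
    have h1 := hM (M + m) (by omega)
    have h2 := hind (M + m)
    rw [← add_assoc] at h2
    linarith
  rw [Filter.liminf_eq]
  by_cases hbd : BddAbove {a | ∀ᶠ n in Filter.atTop, a ≤ r n}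
  · refine le_of_forall_pos_le_add fun ε hε => ?_
    have := le_csSup hbd (key ε hε)
    linarith
  · rw [Real.sSup_of_not_bddAbove hbd]
end

section
/- Let H and H' be real Hilbert spaces, let G : H' -> H be bounded and linear, let A be a monotone set-valued operator on H, and let B : H -> H. Fix alpha in [0,1] and rho > 0, and suppose either (i) B is L^{-1}-cocoercive with L > 0 and rho <= 2(1 - alpha)/L, or (ii) B is constant. Fix z in H', and x, w in H, and set t = (1 - alpha)x + alpha*Gz - rho*(Bx - w). Suppose x^+ in H and a^+ in A x^+ satisfy x^+ + rho*a^+ = t (that is, x^+ is a value of the resolvent J_{rho A} at t). Then for every theta in the domain of A and every a-hat in A(theta), setting w-hat = a-hat + B(theta), one has ||x^+ - theta|| <= (1 - alpha)||x - theta|| + alpha*||Gz - theta|| + rho*||w - w-hat||. -/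
open scoped InnerProductSpace

/-- contractive lemma for the one-forward-step update: with `A` monotone,
`B` either `L⁻¹`-cocoercive with `ρ ≤ 2(1-α)/L` or constant, `α ∈ [0,1]`, `ρ > 0`,
`t = (1-α)x + α Gz - ρ(Bx - w)` and `x⁺ = J_{ρA}(t)` (i.e. `x⁺ + ρ a⁺ = t` for some
`a⁺ ∈ A x⁺`), one has for every `θ ∈ dom A`, `â ∈ A θ` and `ŵ = â + Bθ`:
`‖x⁺ - θ‖ ≤ (1-α)‖x - θ‖ + α‖Gz - θ‖ + ρ‖w - ŵ‖`. -/
theorem one_forward_step_contractive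
    {H H' : Type*} [NormedAddCommGroup H] [InnerProductSpace ℝ H]
    [NormedAddCommGroup H'] [InnerProductSpace ℝ H']
    (G : H' →L[ℝ] H)
    (A : H → Set H)
    (hA : ∀ x y a b, a ∈ A x → b ∈ A y → 0 ≤ ⟪a - b, x - y⟫_ℝ)
    (B : H → H)
    (α ρ : ℝ) (hα0 : 0 ≤ α) (hα1 : α ≤ 1) (hρ : 0 < ρ)
    (hB : (∃ L : ℝ, 0 < L ∧
            (∀ x y, (1 / L) * ‖B x - B y‖ ^ 2 ≤ ⟪B x - B y, x - y⟫_ℝ) ∧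
            ρ ≤ 2 * (1 - α) / L)
          ∨ (∃ v, ∀ x, B x = v))
    (z : H') (x w : H)
    (t : H) (ht : t = (1 - α) • x + α • G z - ρ • (B x - w))
    (xp ap : H) (hap : ap ∈ A xp) (hres : xp + ρ • ap = t)
    (θ ahat : H) (hahat : ahat ∈ A θ) :
    ‖xp - θ‖ ≤ (1 - α) * ‖x - θ‖ + α * ‖G z - θ‖ + ρ * ‖w - (ahat + B θ)‖ := by
  have h1 : ‖(1 - α) • (x - θ) - ρ • (B x - B θ)‖ ≤ (1 - α) * ‖x - θ‖ := by
    have h1α : 0 ≤ 1 - α := by linarith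
    rcases hB with ⟨L, hL, hco, hρL⟩ | ⟨v, hv⟩
    · refine (abs_le_of_sq_le_sq' ?_ (by positivity)).2
      have hc := hco x θ
      rw [norm_sub_sq_real, norm_smul, norm_smul, real_inner_smul_left, real_inner_smul_right,
        real_inner_comm, Real.norm_of_nonneg h1α, Real.norm_of_nonneg hρ.le]
      have e1 : ρ * (ρ * ‖B x - B θ‖ ^ 2) ≤ ρ * (2 * (1 - α) / L * ‖B x - B θ‖ ^ 2) := by
        gcongr
      have e2 : 2 * (1 - α) * ρ * ((1 / L) * ‖B x - B θ‖ ^ 2)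
          ≤ 2 * (1 - α) * ρ * ⟪B x - B θ, x - θ⟫_ℝ := by
        gcongr
      have e3 : ρ * (2 * (1 - α) / L * ‖B x - B θ‖ ^ 2)
          = 2 * (1 - α) * ρ * ((1 / L) * ‖B x - B θ‖ ^ 2) := by ring
      nlinarith
    · simp only [hv, sub_self, smul_zero, sub_zero]
      rw [norm_smul, Real.norm_of_nonneg h1α]
  have h2 : ‖xp - θ‖ ≤ ‖(xp - θ) + ρ • (ap - ahat)‖ := by
    refine (abs_le_of_sq_le_sq' ?_ (norm_nonneg _)).2
    rw [norm_add_sq_real, real_inner_smul_right, real_inner_comm]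
    have := mul_nonneg hρ.le (hA xp θ ap ahat hap hahat)
    nlinarith [sq_nonneg ‖ρ • (ap - ahat)‖]
  have h3 : (xp - θ) + ρ • (ap - ahat) = ((1 - α) • (x - θ) - ρ • (B x - B θ))
      + α • (G z - θ) + ρ • (w - (ahat + B θ)) := by
    have h4 : (xp - θ) + ρ • (ap - ahat) = t - θ - ρ • ahat := by
      rw [← hres]; module
    rw [h4, ht]; module
  rw [h3] at h2
  have h5 := norm_add₃_le (a := (1 - α) • (x - θ) - ρ • (B x - B θ))
    (b := α • (G z - θ)) (c := ρ • (w - (ahat + B θ)))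
  rw [norm_smul α, norm_smul ρ, Real.norm_of_nonneg hα0, Real.norm_of_nonneg hρ.le] at h5
  linarith
end

section
/- Let H and H' be real Hilbert spaces, let G : H' -> H be bounded and linear, let A be a monotone set-valued operator on H, and let B : H -> H be L^{-1}-cocoercive with L > 0. Fix alpha in (0,1] and rho > 0 with rho <= 2(1 - alpha)/L. Fix z in H', and x, w in H. Let a in A x and set y = a + Bx. Set t = (1 - alpha)x + alpha*Gz - rho*(Bx - w), and suppose x^+ in H and a^+ in A x^+ satisfy x^+ + rho*a^+ = t. Set y^+ = a^+ + B x^+ and y-hat = a^+ + Bx. Then <Gz - x^+, y^+ - w> >= (rho/(2 alpha)) * ( ||y^+ - w||^2 + alpha * ||y-hat - w||^2 ) + (1 - alpha) * ( <Gz - x, y - w> - (rho/(2 alpha)) * ||y - w||^2 ). -/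
open scoped InnerProductSpace

/-- ascent lemma, cocoercive case: with `A` monotone and `B`
`L⁻¹`-cocoercive (`L > 0`), `α ∈ (0,1]`, `0 < ρ ≤ 2(1-α)/L`, `a ∈ Ax`, `y = a + Bx`,
`t = (1-α)x + α Gz - ρ(Bx - w)`, `x⁺ + ρ a⁺ = t` with `a⁺ ∈ A x⁺`, `y⁺ = a⁺ + Bx⁺`,
`ŷ = a⁺ + Bx`, the new separator value satisfies
`⟪Gz - x⁺, y⁺ - w⟫ ≥ (ρ/2α)(‖y⁺ - w‖² + α‖ŷ - w‖²) + (1-α)(⟪Gz - x, y - w⟫ - (ρ/2α)‖y - w‖²)`. -/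
theorem one_forward_step_ascent_cocoercive
    {H H' : Type*} [NormedAddCommGroup H] [InnerProductSpace ℝ H]
    [NormedAddCommGroup H'] [InnerProductSpace ℝ H']
    (G : H' →L[ℝ] H)
    (A : H → Set H)
    (hA : ∀ x y a b, a ∈ A x → b ∈ A y → 0 ≤ ⟪a - b, x - y⟫_ℝ)
    (L : ℝ) (hL : 0 < L) (B : H → H)
    (hB : ∀ x y, (1 / L) * ‖B x - B y‖ ^ 2 ≤ ⟪B x - B y, x - y⟫_ℝ)
    (α ρ : ℝ) (hα0 : 0 < α) (hα1 : α ≤ 1) (hρ : 0 < ρ) (hρL : ρ ≤ 2 * (1 - α) / L)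
    (z : H') (x w : H)
    (a : H) (ha : a ∈ A x) (y : H) (hy : y = a + B x)
    (t : H) (ht : t = (1 - α) • x + α • G z - ρ • (B x - w))
    (xp ap : H) (hap : ap ∈ A xp) (hres : xp + ρ • ap = t)
    (yp : H) (hyp : yp = ap + B xp)
    (yhat : H) (hyhat : yhat = ap + B x) :
    ⟪G z - xp, yp - w⟫_ℝ
      ≥ (ρ / (2 * α)) * (‖yp - w‖ ^ 2 + α * ‖yhat - w‖ ^ 2)
        + (1 - α) * (⟪G z - x, y - w⟫_ℝ - (ρ / (2 * α)) * ‖y - w‖ ^ 2) := by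
  obtain ⟨s, hs⟩ : ∃ s, s = xp - x := ⟨_, rfl⟩
  obtain ⟨p, hp⟩ : ∃ p, p = yhat - w := ⟨_, rfl⟩
  obtain ⟨d, hd⟩ : ∃ d, d = B xp - B x := ⟨_, rfl⟩
  obtain ⟨e, he⟩ : ∃ e, e = ap - a := ⟨_, rfl⟩
  have h1 := hA xp x ap a hap ha
  have h2 := hB xp x
  rw [← hs, ← he] at h1
  rw [← hs, ← hd] at h2
  have ey : y - w = p - e := by rw [hy, hp, he, hyhat]; abel
  have eyp : yp - w = p + d := by rw [hyp, hp, hd, hyhat]; abel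
  have hu : α • (G z - x) = s + ρ • p := by
    have hx : xp = t - ρ • ap := by rw [← hres]; abel
    rw [hs, hp, hyhat, hx, ht]
    module
  have eu : G z - x = α⁻¹ • (s + ρ • p) := by
    rw [← hu, smul_smul, inv_mul_cancel₀ hα0.ne', one_smul]
  have eup : G z - xp = α⁻¹ • (s + ρ • p) - s := by
    rw [← eu, hs]; abel
  have h3 : ρ / 2 * ‖d‖ ^ 2 ≤ (1 - α) * ⟪d, s⟫_ℝ := by
    have h4 : ρ / 2 ≤ (1 - α) * (1 / L) := by
      have : 2 * (1 - α) / L = 2 * ((1 - α) * (1 / L)) := by ring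
      linarith
    calc ρ / 2 * ‖d‖ ^ 2 ≤ (1 - α) * (1 / L) * ‖d‖ ^ 2 := by gcongr
      _ = (1 - α) * ((1 / L) * ‖d‖ ^ 2) := by ring
      _ ≤ _ := mul_le_mul_of_nonneg_left h2 (by linarith)
  have h5 : 0 ≤ (1 - α) * ⟪e, s⟫_ℝ := mul_nonneg (by linarith) h1
  have h6 : 0 ≤ (1 - α) * (ρ / 2 * ‖e‖ ^ 2) := mul_nonneg (by linarith) (by positivity)
  rw [ey, eyp, eu, eup, ← hp, ge_iff_le, ← sub_nonneg]
  have key : 0 ≤ α⁻¹ * (((1 - α) * ⟪d, s⟫_ℝ - ρ / 2 * ‖d‖ ^ 2) + (1 - α) * ⟪e, s⟫_ℝ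
      + (1 - α) * (ρ / 2 * ‖e‖ ^ 2)) :=
    mul_nonneg (by positivity) (by linarith)
  refine key.trans_eq ?_
  rw [norm_add_sq_real, norm_sub_sq_real]
  simp only [inner_sub_left, inner_sub_right, inner_add_left, inner_add_right,
    real_inner_smul_left, real_inner_self_eq_norm_sq]
  rw [real_inner_comm s d, real_inner_comm s e]
  field_simp
  ring
end

section
/- Let H and H' be real Hilbert spaces, let G : H' -> H be bounded and linear, let A be a monotone set-valued operator on H, and let B : H -> H be a constant operator, i.e. there is v in H with Bx = v for all x in H. Fix alpha in (0,1] and rho > 0. Fix z in H', and x, w in H. Let a in A x and set y = a + v. Set t = (1 - alpha)x + alpha*Gz - rho*(v - w), and suppose x^+ in H and a^+ in A x^+ satisfy x^+ + rho*a^+ = t. Set y^+ = a^+ + v. Then <Gz - x^+, y^+ - w> >= (rho*(1 + alpha)/(2 alpha)) * ||y^+ - w||^2 + (1 - alpha) * ( <Gz - x, y - w> - (rho/(2 alpha)) * ||y - w||^2 ). -/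
open scoped InnerProductSpace

/-- ascent lemma, constant case: with `A` monotone and `B ≡ v` constant,
`α ∈ (0,1]`, `ρ > 0`, `a ∈ Ax`, `y = a + v`, `t = (1-α)x + α Gz - ρ(v - w)`,
`x⁺ + ρ a⁺ = t` with `a⁺ ∈ A x⁺`, and `y⁺ = a⁺ + v`, one has
`⟪Gz - x⁺, y⁺ - w⟫ ≥ (ρ(1+α)/2α)‖y⁺ - w‖² + (1-α)(⟪Gz - x, y - w⟫ - (ρ/2α)‖y - w‖²)`. -/
theorem one_forward_step_ascent_constant
    {H H' : Type*} [NormedAddCommGroup H] [InnerProductSpace ℝ H]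
    [NormedAddCommGroup H'] [InnerProductSpace ℝ H']
    (G : H' →L[ℝ] H)
    (A : H → Set H)
    (hA : ∀ x y a b, a ∈ A x → b ∈ A y → 0 ≤ ⟪a - b, x - y⟫_ℝ)
    (B : H → H) (v : H) (hBv : ∀ x, B x = v)
    (α ρ : ℝ) (hα0 : 0 < α) (hα1 : α ≤ 1) (hρ : 0 < ρ)
    (z : H') (x w : H)
    (a : H) (ha : a ∈ A x) (y : H) (hy : y = a + v)
    (t : H) (ht : t = (1 - α) • x + α • G z - ρ • (v - w))
    (xp ap : H) (hap : ap ∈ A xp) (hres : xp + ρ • ap = t)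
    (yp : H) (hyp : yp = ap + v) :
    ⟪G z - xp, yp - w⟫_ℝ
      ≥ (ρ * (1 + α) / (2 * α)) * ‖yp - w‖ ^ 2
        + (1 - α) * (⟪G z - x, y - w⟫_ℝ - (ρ / (2 * α)) * ‖y - w‖ ^ 2) := by
  have hm := hA xp x ap a hap ha
  obtain ⟨p, hp⟩ : ∃ p, p = yp - w := ⟨_, rfl⟩
  obtain ⟨q, hq⟩ : ∃ q, q = y - w := ⟨_, rfl⟩
  obtain ⟨u, hu⟩ : ∃ u, u = G z - x := ⟨_, rfl⟩
  have h0 : xp = t - ρ • ap := by rw [← hres]; abel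
  have h1 : G z - xp = (1 - α) • u + ρ • p := by
    rw [h0, ht, hp, hu, hyp]; module
  have h2 : xp - x = α • u - ρ • p := by
    rw [h0, ht, hp, hu, hyp]; module
  have h3 : ap - a = p - q := by
    rw [hp, hq, hyp, hy]; module
  rw [h3, h2] at hm
  rw [h1, ← hp, ← hq, ← hu]
  have hs : 0 ≤ ⟪p - q, p - q⟫_ℝ := real_inner_self_nonneg
  simp only [inner_sub_left, inner_sub_right, inner_add_left, real_inner_smul_left,
    real_inner_smul_right] at hm hs ⊢
  rw [← real_inner_self_eq_norm_sq, ← real_inner_self_eq_norm_sq]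
  rw [real_inner_comm p q] at hs
  rw [real_inner_comm u p, real_inner_comm u q] at hm
  rw [real_inner_comm p q] at hm
  generalize ⟪p, p⟫_ℝ = P at *
  generalize ⟪q, q⟫_ℝ = Q at *
  generalize ⟪q, p⟫_ℝ = R at *
  generalize ⟪p, q⟫_ℝ = R' at *
  generalize ⟪u, p⟫_ℝ = X at *
  generalize ⟪u, q⟫_ℝ = Y at *
  have key : (1 - α) * X + ρ * P
      - (ρ * (1 + α) / (2 * α) * P + (1 - α) * (Y - ρ / (2 * α) * Q))
      = (1 - α) / (2 * α) * (2 * (α * X - α * Y - (ρ * P - ρ * R'))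
        + ρ * (P - R' - (R' - Q))) := by
    field_simp
    ring
  have h1α : 0 ≤ 1 - α := by linarith
  have hpos : 0 ≤ (1 - α) / (2 * α) * (2 * (α * X - α * Y - (ρ * P - ρ * R'))
        + ρ * (P - R' - (R' - Q))) := by
    apply mul_nonneg
    · positivity
    · have := mul_nonneg hρ.le hs
      linarith
  linarith
end

section
/- Let H_0, H_1, ..., H_{n-1} be real Hilbert spaces, set H_n = H_0, let G_i : H_0 -> H_i be bounded linear for i = 1, ..., n-1, with G_n the identity on H_0. For each i = 1, ..., n, let A_i be a maximal monotone set-valued operator on H_i, and let B_i : H_i -> H_i be defined on all of H_i and either L_i^{-1}-cocoercive with L_i > 0, or constant (in which case put L_i = 0). Set T_i = A_i + B_i and assume the extended solution set S is nonempty. Fix gamma > 0 and, for each i, alpha_i in (0,1] and rho_i > 0 such that rho_i <= 2(1 - alpha_i)/L_i whenever L_i > 0. Let z^1 in H_0, w_i^1 in H_i (i = 1, ..., n-1), and x_i^0 in H_i be arbitrary, and write w_n^k = -sum_{i=1}^{n-1} G_i^* w_i^k for all k. Suppose that for every k >= 1 the following updates hold: for each i = 1, ..., n there exists a_i^k in A_i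 x_i^k with x_i^k + rho_i * a_i^k = (1 - alpha_i) x_i^{k-1} + alpha_i * G_i z^k - rho_i * (B_i x_i^{k-1} - w_i^k), and y_i^k = a_i^k + B_i x_i^k; then, setting u_i^k = x_i^k - G_i x_n^k for i = 1, ..., n-1, v^k = sum_{i=1}^{n-1} G_i^* y_i^k + y_n^k, and pi_k = sum_{i=1}^{n-1} ||u_i^k||^2 + gamma^{-1} ||v^k||^2, assume pi_k > 0, and define tau_k = max{0, phi_k(z^k, w_1^k, ..., w_{n-1}^k)} / pi_k where phi_k(z, w_1, ..., w_{n-1}) = sum_{i=1}^n <G_i z - x_i^k, y_i^k - w_i> (with w_n = -sum_{i=1}^{n-1} G_i^* w_i), and set z^{k+1} = z^k - gamma^{-1} tau_k v^k and w_i^{k+1} = w_i^k - tau_k u_i^k for i = 1, ..., n-1. Then there exists a point (z-bar, w-bar_1, ..., w-bar_{n-1}) in S such that (z^k, w_1^k, ..., w_{n-1}^k) converges weakly to (z-bar, w-bar_1, ..., w-bar_{n-1}); moreover x_i^k converges weakly to G_i z-bar and y_i^k converges weakly to w-bar_i for i = 1, ..., n-1, x_n^k converges weakly to z-bar, and y_n^k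 converges weakly to -sum_{i=1}^{n-1} G_i^* w-bar_i. -/
open scoped InnerProductSpace
namespace OFS
open Filter Topology

lemma real_bdd {u : ℕ → ℝ} {α K : ℝ} (hα0 : 0 < α) (hα1 : α ≤ 1)
    (h : ∀ k, u (k+1) ≤ (1-α) * u k + K) : ∃ C, ∀ k, u k ≤ C := by
  refine ⟨max (u 0) (K/α), fun k => ?_⟩
  induction k with
  | zero => exact le_max_left _ _
  | succ k ih =>
    have h1 : K ≤ α * max (u 0) (K/α) := by
      have : K / α ≤ max (u 0) (K/α) := le_max_right _ _
      rw [div_le_iff₀ hα0] at this; linarith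
    have := mul_le_mul_of_nonneg_left ih (by linarith : (0:ℝ) ≤ 1 - α)
    linarith [h k]

lemma real_tendsto {u e : ℕ → ℝ} {α : ℝ} (hα0 : 0 < α) (hα1 : α ≤ 1) (hu : ∀ k, 0 ≤ u k)
    (h : ∀ k ≥ 1, u (k+1) ≤ (1-α) * u k + e k) (he : Tendsto e atTop (𝓝 0)) :
    Tendsto u atTop (𝓝 0) := by
  rw [Metric.tendsto_atTop]
  intro ε hε
  obtain ⟨N, hN⟩ := (Metric.tendsto_atTop.1 he) (α * (ε/2)) (by positivity)
  set M := max N 1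
  have key : ∀ j, u (M + j) ≤ (1-α)^j * u M + ε/2 := by
    intro j
    induction j with
    | zero => simp; linarith
    | succ j ih =>
      have h1 := h (M+j) (le_trans (le_max_right N 1) (Nat.le_add_right _ _))
      have h2 := hN (M+j) (le_trans (le_max_left N 1) (Nat.le_add_right _ _))
      rw [Real.dist_eq, sub_zero] at h2
      have h3 := le_abs_self (e (M+j))
      have := mul_le_mul_of_nonneg_left ih (by linarith : (0:ℝ) ≤ 1 - α)
      rw [← add_assoc, pow_succ]
      nlinarith
  have hp : Tendsto (fun j : ℕ => (1-α)^j * u M) atTop (𝓝 (0 * u M)) :=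
    (tendsto_pow_atTop_nhds_zero_of_lt_one (by linarith) (by linarith)).mul_const _
  rw [zero_mul] at hp
  obtain ⟨J, hJ⟩ := (Metric.tendsto_atTop.1 hp) (ε/2) (by positivity)
  refine ⟨M + J, fun n hn => ?_⟩
  obtain ⟨j, rfl⟩ := Nat.exists_eq_add_of_le (le_trans (Nat.le_add_right M J) hn)
  have h1 := hJ j (by omega)
  rw [Real.dist_eq, sub_zero] at h1 ⊢
  rw [abs_of_nonneg (hu _)]
  linarith [key j, le_abs_self ((1-α)^j * u M)]

section block
variable {E : Type*} [NormedAddCommGroup E] [InnerProductSpace ℝ E]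

lemma coco {B : E → E} {α ρ : ℝ} (hα1 : α ≤ 1)
    (hB : (∃ L : ℝ, 0 < L ∧
            (∀ x y, (1 / L) * ‖B x - B y‖ ^ 2 ≤ ⟪B x - B y, x - y⟫_ℝ) ∧
            ρ ≤ 2 * (1 - α) / L)
          ∨ (∃ v, ∀ x, B x = v)) :
    ∃ c : ℝ, 0 < c ∧ ∀ x y, c * ‖B x - B y‖ ^ 2 ≤ ⟪B x - B y, x - y⟫_ℝ ∧
      ρ * ‖B x - B y‖ ^ 2 ≤ 2 * (1 - α) * ⟪B x - B y, x - y⟫_ℝ := by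
  rcases hB with ⟨L, hL, h, hr⟩ | ⟨v, hv⟩
  · refine ⟨1/L, by positivity, fun x y => ⟨h x y, ?_⟩⟩
    have h1 := mul_le_mul_of_nonneg_right hr (sq_nonneg ‖B x - B y‖)
    have h2 := mul_le_mul_of_nonneg_left (h x y) (by linarith : 0 ≤ 2 * (1-α))
    calc _ ≤ _ := h1
      _ = 2 * (1 - α) * (1 / L * ‖B x - B y‖ ^ 2) := by ring
      _ ≤ _ := h2
  · exact ⟨1, one_pos, fun x y => by simp [hv]⟩

lemma B_lip {B : E → E} {c : ℝ} (hc : 0 < c)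
    (h : ∀ x y, c * ‖B x - B y‖ ^ 2 ≤ ⟪B x - B y, x - y⟫_ℝ) (x y : E) :
    ‖B x - B y‖ ≤ ‖x - y‖ / c := by
  rw [le_div_iff₀ hc]
  have h1 := (h x y).trans (real_inner_le_norm _ _)
  by_contra hh
  push Not at hh
  have : 0 < ‖B x - B y‖ := by
    by_contra h0
    have : ‖B x - B y‖ = 0 := le_antisymm (not_lt.1 h0) (norm_nonneg _)
    rw [this] at hh; linarith [norm_nonneg (x-y)]
  nlinarith

/-- forward-step contraction -/
lemma fwd {ρ α : ℝ} (hα1 : α ≤ 1) (hρ : 0 < ρ) (e d : E)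
    (h : ρ * ‖d‖ ^ 2 ≤ 2 * (1 - α) * ⟪d, e⟫_ℝ) : ‖(1-α) • e - ρ • d‖ ≤ (1-α) * ‖e‖ := by
  apply le_of_sq_le_sq _ (mul_nonneg (by linarith) (norm_nonneg _))
  rw [norm_sub_sq_real, norm_smul, norm_smul, inner_smul_left, inner_smul_right,
    real_inner_comm]
  simp only [Real.norm_eq_abs, mul_pow, sq_abs, conj_trivial]
  nlinarith

lemma le_of_sq_inner {e f : E} (h : ‖e‖ ^ 2 ≤ ⟪f, e⟫_ℝ) : ‖e‖ ≤ ‖f‖ := by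
  have h1 := h.trans (real_inner_le_norm _ _)
  by_contra hh
  push Not at hh
  nlinarith [norm_nonneg f]

lemma block_bdd {A : E → Set E} {B : E → E} {α ρ c : ℝ}
    (hmono : ∀ x y a b, a ∈ A x → b ∈ A y → 0 ≤ ⟪a - b, x - y⟫_ℝ)
    (hα0 : 0 < α) (hα1 : α ≤ 1) (hρ : 0 < ρ) (hc : 0 < c)
    (hB : ∀ x y, c * ‖B x - B y‖ ^ 2 ≤ ⟪B x - B y, x - y⟫_ℝ ∧
      ρ * ‖B x - B y‖ ^ 2 ≤ 2 * (1 - α) * ⟪B x - B y, x - y⟫_ℝ)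
    {t w x a y : ℕ → E} {s b : E} (hs : b ∈ A s)
    (ha : ∀ k ≥ 1, a k ∈ A (x k))
    (hx : ∀ k ≥ 1, x k + ρ • a k = (1 - α) • x (k-1) + α • t k - ρ • (B (x (k-1)) - w k))
    (hy : ∀ k ≥ 1, y k = a k + B (x k))
    (ht : ∃ C, ∀ k ≥ 1, ‖t k‖ ≤ C) (hw : ∃ C, ∀ k ≥ 1, ‖w k‖ ≤ C) :
    (∃ C, ∀ k ≥ 1, ‖x k‖ ≤ C) ∧ (∃ C, ∀ k ≥ 1, ‖y k‖ ≤ C) := by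
  obtain ⟨Ct, ht⟩ := ht
  obtain ⟨Cw, hw⟩ := hw
  have hα' : ∀ v : E, ‖α • v‖ = α * ‖v‖ := fun v => by
    rw [norm_smul, Real.norm_of_nonneg hα0.le]
  have hρ' : ∀ v : E, ‖ρ • v‖ = ρ * ‖v‖ := fun v => by
    rw [norm_smul, Real.norm_of_nonneg hρ.le]
  have step : ∀ k, ‖x (k+1) - s‖ ≤ (1-α) * ‖x k - s‖ +
      (α * Ct + ρ * Cw + ‖(1-α) • s - ρ • B s - s - ρ • b‖) := by
    intro k
    have h1 := hx (k+1) (by omega)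
    rw [Nat.add_sub_cancel] at h1
    have h2 := hmono _ _ _ _ (ha (k+1) (by omega)) hs
    have h3 : ‖x (k+1) - s‖ ≤ ‖(x (k+1) + ρ • a (k+1)) - (s + ρ • b)‖ := by
      apply le_of_sq_inner
      have : x (k+1) + ρ • a (k+1) - (s + ρ • b) = (x (k+1) - s) + ρ • (a (k+1) - b) := by module
      rw [this, inner_add_left, inner_smul_left, real_inner_self_eq_norm_sq]
      simp only [conj_trivial]
      nlinarith
    have h4 : (x (k+1) + ρ • a (k+1)) - (s + ρ • b) =
      ((1-α) • (x k - s) - ρ • (B (x k) - B s)) + (α • t (k+1) + ρ • w (k+1) +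
        ((1-α) • s - ρ • B s - s - ρ • b)) := by rw [h1]; module
    rw [h4] at h3
    have h5 := fwd hα1 hρ (x k - s) (B (x k) - B s) (hB _ _).2
    have h6 : ‖α • t (k+1)‖ ≤ α * Ct := by
      rw [hα']; exact mul_le_mul_of_nonneg_left (ht _ (by omega)) hα0.le
    have h7 : ‖ρ • w (k+1)‖ ≤ ρ * Cw := by
      rw [hρ']; exact mul_le_mul_of_nonneg_left (hw _ (by omega)) hρ.le
    have h8 := norm_add_le ((1-α) • (x k - s) - ρ • (B (x k) - B s)) (α • t (k+1) + ρ • w (k+1) +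
        ((1-α) • s - ρ • B s - s - ρ • b))
    have h9 := norm_add₃_le (a := α • t (k+1)) (b := ρ • w (k+1))
      (c := (1-α) • s - ρ • B s - s - ρ • b)
    linarith
  obtain ⟨C, hC⟩ := real_bdd (u := fun k => ‖x k - s‖) hα0 hα1 step
  have hBb : ∀ k, ‖B (x k)‖ ≤ C / c + ‖B s‖ := fun k => by
    have h1 := B_lip hc (fun x y => (hB x y).1) (x k) s
    have h2 : ‖x k - s‖ / c ≤ C / c := div_le_div_of_nonneg_right (hC k) hc.le
    have h3 := norm_le_norm_add_norm_sub' (B (x k)) (B s)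
    linarith
  have hxb : ∀ k, ‖x k‖ ≤ C + ‖s‖ := fun k => by
    have h3 := norm_le_norm_add_norm_sub' (x k) s
    linarith [hC k]
  refine ⟨⟨_, fun k _ => hxb k⟩, ?_⟩
  refine ⟨ρ⁻¹ * ((1-α) * (C + ‖s‖) + α * Ct + ρ * (C / c + ‖B s‖) + ρ * Cw + (C + ‖s‖))
    + (C / c + ‖B s‖), fun k hk => ?_⟩
  rw [hy k hk]
  refine (norm_add_le _ _).trans (add_le_add ?_ (hBb k))
  have h1 : a k = ρ⁻¹ • ((1 - α) • x (k-1) + α • t k + -(ρ • B (x (k-1))) + ρ • w k + -x k) := by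
    rw [eq_inv_smul_iff₀ hρ.ne', ← sub_eq_zero]
    have := hx k hk
    rw [← sub_eq_zero] at this
    rw [← this]; module
  rw [h1, norm_smul, Real.norm_of_nonneg (inv_nonneg.2 hρ.le)]
  apply mul_le_mul_of_nonneg_left _ (inv_nonneg.2 hρ.le)
  refine norm_add_le_of_le (norm_add_le_of_le (norm_add_le_of_le (norm_add_le_of_le ?_ ?_) ?_) ?_) ?_
  · rw [norm_smul, Real.norm_of_nonneg (by linarith)]
    exact mul_le_mul_of_nonneg_left (hxb _) (by linarith)
  · rw [hα']; exact mul_le_mul_of_nonneg_left (ht _ hk) hα0.le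
  · rw [norm_neg, hρ']; exact mul_le_mul_of_nonneg_left (hBb _) hρ.le
  · rw [hρ']; exact mul_le_mul_of_nonneg_left (hw _ hk) hρ.le
  · rw [norm_neg]; exact hxb k

lemma block_r {A : E → Set E} {B : E → E} {α ρ c : ℝ}
    (hmono : ∀ x y a b, a ∈ A x → b ∈ A y → 0 ≤ ⟪a - b, x - y⟫_ℝ)
    (hα0 : 0 < α) (hα1 : α ≤ 1) (hρ : 0 < ρ)
    (hB : ∀ x y, c * ‖B x - B y‖ ^ 2 ≤ ⟪B x - B y, x - y⟫_ℝ ∧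
      ρ * ‖B x - B y‖ ^ 2 ≤ 2 * (1 - α) * ⟪B x - B y, x - y⟫_ℝ)
    {t w x a y : ℕ → E}
    (ha : ∀ k ≥ 1, a k ∈ A (x k))
    (hx : ∀ k ≥ 1, x k + ρ • a k = (1 - α) • x (k-1) + α • t k - ρ • (B (x (k-1)) - w k))
    (hy : ∀ k ≥ 1, y k = a k + B (x k))
    (ht : Tendsto (fun k => t (k+1) - t k) atTop (𝓝 0))
    (hw : Tendsto (fun k => w (k+1) - w k) atTop (𝓝 0)) :
    Tendsto (fun k => α • (x k - t k) + ρ • (y k - w k)) atTop (𝓝 0) := by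
  rw [tendsto_zero_iff_norm_tendsto_zero]
  have he : Tendsto (fun k => ‖α • (t (k+1) - t k) + ρ • (w (k+1) - w k)‖) atTop (𝓝 0) := by
    have := ((ht.const_smul α).add (hw.const_smul ρ)).norm
    simpa using this
  refine real_tendsto hα0 hα1 (fun k => norm_nonneg _) ?_ he
  intro k hk
  have h1 := hx (k+1) (by omega)
  rw [Nat.add_sub_cancel] at h1
  set e := x (k+1) - x k with he
  set d := B (x (k+1)) - B (x k) with hd
  set r' := α • (x k - t (k+1)) + ρ • (y k - w (k+1)) with hr'
  have h2 : α • (x (k+1) - t (k+1)) + ρ • (y (k+1) - w (k+1)) = -((1-α) • e - ρ • d) := by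
    rw [hy (k+1) (by omega), ← sub_eq_zero]
    rw [← sub_eq_zero] at h1
    rw [← h1, he, hd]; module
  have h3 := fwd hα1 hρ e d (hB _ _).2
  have h4 := hmono _ _ _ _ (ha (k+1) (by omega)) (ha k hk)
  have h5 : ‖e‖ ≤ ‖-r'‖ := by
    apply le_of_sq_inner
    have : ρ • (a (k+1) - a k) = -r' - e := by
      rw [hr', hy k hk, he, ← sub_eq_zero]
      rw [← sub_eq_zero] at h1
      rw [← h1]; module
    have h6 : 0 ≤ ⟪ρ • (a (k+1) - a k), e⟫_ℝ := by
      rw [inner_smul_left]; exact mul_nonneg hρ.le h4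
    rw [this, inner_sub_left, real_inner_self_eq_norm_sq] at h6
    linarith
  rw [h2, norm_neg]
  rw [norm_neg] at h5
  have h6 : r' = (α • (x k - t k) + ρ • (y k - w k)) -
    (α • (t (k+1) - t k) + ρ • (w (k+1) - w k)) := by rw [hr']; module
  have h7 := norm_sub_le (α • (x k - t k) + ρ • (y k - w k))
    (α • (t (k+1) - t k) + ρ • (w (k+1) - w k))
  rw [← h6] at h7
  have h8 : ‖e‖ ≤ _ := h5.trans h7
  have h9 := mul_le_mul_of_nonneg_left h8 (by linarith : 0 ≤ 1 - α)
  have := norm_nonneg (α • (t (k+1) - t k) + ρ • (w (k+1) - w k))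
  nlinarith

lemma inner_tendsto_zero {l : Filter ℕ} {f g : ℕ → E} (hf : ∃ C, ∀ᶠ k in l, ‖f k‖ ≤ C)
    (hg : Tendsto g l (𝓝 0)) : Tendsto (fun k => ⟪f k, g k⟫_ℝ) l (𝓝 0) := by
  obtain ⟨C, hC⟩ := hf
  have h1 : Tendsto (fun k => C * ‖g k‖) l (𝓝 0) := by
    simpa using (hg.norm).const_mul C
  refine squeeze_zero_norm' ?_ h1
  filter_upwards [hC] with k hk
  exact (norm_inner_le_norm _ _).trans (mul_le_mul_of_nonneg_right hk (norm_nonneg _))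

/-- weak compactness along ultrafilters -/
lemma weak_lim [CompleteSpace E] (F : Ultrafilter ℕ) {f : ℕ → E}
    (hf : ∃ C, ∀ᶠ k in (F : Filter ℕ), ‖f k‖ ≤ C) :
    ∃ p : E, ∀ q, Tendsto (fun k => ⟪f k, q⟫_ℝ) F (𝓝 ⟪p, q⟫_ℝ) := by
  obtain ⟨C, hC⟩ := hf
  let g : ℕ → WeakDual ℝ E := fun k => StrongDual.toWeakDual (InnerProductSpace.toDual ℝ E (f k))
  have hK := WeakDual.isCompact_closedBall (𝕜 := ℝ) (E := E) 0 C
  have hmem : ∀ᶠ k in (F : Filter ℕ), g k ∈ WeakDual.toStrongDual ⁻¹' Metric.closedBall (0 : StrongDual ℝ E) C := by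
    filter_upwards [hC] with k hk
    simp only [Set.mem_preimage, Metric.mem_closedBall, dist_zero_right]
    change ‖InnerProductSpace.toDual ℝ E (f k)‖ ≤ C
    rwa [LinearIsometryEquiv.norm_map]
  obtain ⟨p, -, hp⟩ := hK.ultrafilter_le_nhds' (F.map g) hmem
  refine ⟨(InnerProductSpace.toDual ℝ E).symm (WeakDual.toStrongDual p), fun q => ?_⟩
  have h1 : Tendsto g F (𝓝 p) := hp
  have h2 := ((WeakDual.eval_continuous (𝕜 := ℝ) (E := E) q).tendsto p).comp h1
  rw [InnerProductSpace.toDual_symm_apply]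
  exact h2

lemma real_lim (F : Ultrafilter ℕ) {f : ℕ → ℝ} (hf : ∃ C, ∀ᶠ k in (F : Filter ℕ), |f k| ≤ C) :
    ∃ p, Tendsto f F (𝓝 p) := by
  obtain ⟨C, hC⟩ := hf
  have hmem : ∀ᶠ k in (F : Filter ℕ), f k ∈ Set.Icc (-C) C := by
    filter_upwards [hC] with k hk using abs_le.1 hk
  obtain ⟨p, -, hp⟩ := (isCompact_Icc (a := -C) (b := C)).ultrafilter_le_nhds' (F.map f) hmem
  exact ⟨p, hp⟩

lemma block_graph [CompleteSpace E] {A : E → Set E} {B : E → E} {c : ℝ}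
    (hmono : ∀ x y a b, a ∈ A x → b ∈ A y → 0 ≤ ⟪a - b, x - y⟫_ℝ)
    (hmax : ∀ x u, (∀ y v, v ∈ A y → 0 ≤ ⟪u - v, x - y⟫_ℝ) → u ∈ A x)
    (hc : 0 < c)
    (hB : ∀ x y, c * ‖B x - B y‖ ^ 2 ≤ ⟪B x - B y, x - y⟫_ℝ)
    (F : Ultrafilter ℕ) {x a y : ℕ → E} {X W : E}
    (ha : ∀ᶠ k in (F : Filter ℕ), a k ∈ A (x k))
    (hy : ∀ᶠ k in (F : Filter ℕ), y k = a k + B (x k))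
    (hxb : ∃ C, ∀ᶠ k in (F : Filter ℕ), ‖x k‖ ≤ C)
    (hyb : ∃ C, ∀ᶠ k in (F : Filter ℕ), ‖y k‖ ≤ C)
    (hX : ∀ q, Tendsto (fun k => ⟪x k, q⟫_ℝ) F (𝓝 ⟪X, q⟫_ℝ))
    (hW : ∀ q, Tendsto (fun k => ⟪y k, q⟫_ℝ) F (𝓝 ⟪W, q⟫_ℝ)) :
    ∃ ℓ : ℝ, 0 ≤ ℓ ∧ Tendsto (fun k => ⟪x k - X, y k - W⟫_ℝ) F (𝓝 ℓ) ∧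
      (ℓ = 0 → ∃ a ∈ A X, W = a + B X) := by
  obtain ⟨Cx, hxb⟩ := hxb
  obtain ⟨Cy, hyb⟩ := hyb
  have hBb : ∀ᶠ k in (F : Filter ℕ), ‖B (x k)‖ ≤ (Cx + ‖X‖) / c + ‖B X‖ := by
    filter_upwards [hxb] with k hk
    have h1 := B_lip hc hB (x k) X
    have h2 : ‖x k - X‖ / c ≤ (Cx + ‖X‖) / c :=
      div_le_div_of_nonneg_right ((norm_sub_le _ _).trans (by linarith)) hc.le
    have h3 := norm_le_norm_add_norm_sub' (B (x k)) (B X)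
    linarith
  obtain ⟨β, hβ⟩ := weak_lim F ⟨_, hBb⟩
  have hxX : ∀ q, Tendsto (fun k => ⟪x k - X, q⟫_ℝ) F (𝓝 0) := fun q => by
    have := (hX q).sub_const ⟪X, q⟫_ℝ
    simpa only [inner_sub_left, sub_self] using this
  have haw : ∀ q, Tendsto (fun k => ⟪a k - (W - β), q⟫_ℝ) F (𝓝 0) := fun q => by
    have h := (((hW q).sub (hβ q))).sub_const ⟪W - β, q⟫_ℝ
    rw [inner_sub_left, sub_self] at h
    refine h.congr' ?_
    filter_upwards [hy] with k hk
    rw [hk]; simp only [inner_sub_left, inner_add_left]; ring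
  have hprod : ∀ {f g : ℕ → E}, (∃ C, ∀ᶠ k in (F : Filter ℕ), ‖f k‖ ≤ C) →
      (∃ C, ∀ᶠ k in (F : Filter ℕ), ‖g k‖ ≤ C) →
      ∃ p, Tendsto (fun k => ⟪f k, g k⟫_ℝ) F (𝓝 p) := by
    rintro f g ⟨C, hC⟩ ⟨D, hD⟩
    refine real_lim F ⟨C * D, ?_⟩
    filter_upwards [hC, hD] with k h1 h2
    exact (abs_real_inner_le_norm _ _).trans
      (mul_le_mul h1 h2 (norm_nonneg _) ((norm_nonneg _).trans h1))
  have b1 : ∃ C, ∀ᶠ k in (F : Filter ℕ), ‖x k - X‖ ≤ C := ⟨Cx + ‖X‖, by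
    filter_upwards [hxb] with k hk using (norm_sub_le _ _).trans (by linarith)⟩
  have b2 : ∃ C, ∀ᶠ k in (F : Filter ℕ), ‖B (x k) - B X‖ ≤ C :=
    ⟨((Cx + ‖X‖) / c + ‖B X‖) + ‖B X‖, by
      filter_upwards [hBb] with k hk using (norm_sub_le _ _).trans (by linarith)⟩
  have b3 : ∃ C, ∀ᶠ k in (F : Filter ℕ), ‖a k - (W - β)‖ ≤ C :=
    ⟨Cy + ((Cx + ‖X‖) / c + ‖B X‖) + ‖W - β‖, by
      filter_upwards [hBb, hyb, hy] with k h1 h2 h3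
      have h4 : a k = y k - B (x k) := by rw [h3]; abel
      rw [h4]
      exact (norm_sub_le _ _).trans (by linarith [norm_sub_le (y k) (B (x k))])⟩
  obtain ⟨l1, hl1⟩ := hprod b3 b1
  obtain ⟨m1, hm1⟩ := hprod b2 b1
  have hm0 : 0 ≤ m1 := ge_of_tendsto' hm1 fun k =>
    le_trans (mul_nonneg hc.le (sq_nonneg _)) (hB _ _)
  have hgr : ∀ s b, b ∈ A s → 0 ≤ l1 + ⟪(W - β) - b, X - s⟫_ℝ := by
    intro s b hb
    have h1 : Tendsto (fun k => ⟪a k - (W - β), x k - X⟫_ℝ + ⟪a k - (W - β), X - s⟫_ℝ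
      + ⟪x k - X, (W - β) - b⟫_ℝ + ⟪(W - β) - b, X - s⟫_ℝ) F
        (𝓝 (l1 + 0 + 0 + ⟪(W - β) - b, X - s⟫_ℝ)) :=
      ((hl1.add (haw _)).add (hxX _)).add_const _
    have h2 : 0 ≤ l1 + 0 + 0 + ⟪(W - β) - b, X - s⟫_ℝ := by
      refine ge_of_tendsto h1 ?_
      filter_upwards [ha] with k hk
      have h3 := hmono _ _ _ _ hk hb
      have e1 : a k - b = (a k - (W - β)) + ((W - β) - b) := by abel
      have e2 : x k - s = (x k - X) + (X - s) := by abel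
      rw [e1, e2, inner_add_left, inner_add_right, inner_add_right,
        real_inner_comm (x k - X) ((W - β) - b)] at h3
      linarith
    simpa using h2
  have hl0 : 0 ≤ l1 := by
    by_contra hneg
    push Not at hneg
    have hm : W - β ∈ A X := hmax _ _ fun s b hb => by linarith [hgr s b hb]
    have := hgr _ _ hm
    simp at this
    linarith
  refine ⟨l1 + m1, by linarith, ?_, ?_⟩
  · have h1 : Tendsto (fun k => ⟪a k - (W - β), x k - X⟫_ℝ + ⟪B (x k) - B X, x k - X⟫_ℝ
      + ⟪x k - X, B X - β⟫_ℝ) F (𝓝 (l1 + m1 + 0)) := (hl1.add hm1).add (hxX _)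
    rw [add_zero] at h1
    refine h1.congr' ?_
    filter_upwards [hy] with k hk
    rw [real_inner_comm (x k - X) (a k - (W - β)), real_inner_comm (x k - X) (B (x k) - B X),
      ← inner_add_right, ← inner_add_right, hk]
    congr 1; abel
  · intro h
    have hl : l1 = 0 := by linarith
    have hm : m1 = 0 := by linarith
    subst hl; subst hm
    have hBs : Tendsto (fun k => ‖B (x k) - B X‖ ^ 2) F (𝓝 0) := by
      refine squeeze_zero (fun k => sq_nonneg _) (g := fun k => c⁻¹ * ⟪B (x k) - B X, x k - X⟫_ℝ)
        (fun k => ?_) (by simpa using hm1.const_mul c⁻¹)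
      rw [← div_eq_inv_mul, le_div_iff₀ hc]; linarith [hB (x k) X]
    have hBs' : Tendsto (fun k => B (x k) - B X) F (𝓝 0) := by
      rw [tendsto_zero_iff_norm_tendsto_zero]
      have := hBs.sqrt
      simpa [Real.sqrt_sq] using this
    have hβX : β = B X := by
      apply ext_inner_right ℝ
      intro q
      refine tendsto_nhds_unique (hβ q) ?_
      have h3 := (hBs'.inner (tendsto_const_nhds (x := q) (f := (F : Filter ℕ)))).add_const ⟪B X, q⟫_ℝ
      simpa [inner_sub_left] using h3
    refine ⟨W - β, hmax _ _ fun s b hb => by simpa using hgr s b hb, ?_⟩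
    rw [hβX]; abel

end block

section alg
set_option linter.unusedSectionVars false
variable {H0 : Type*} [NormedAddCommGroup H0] [InnerProductSpace ℝ H0] [CompleteSpace H0]
    {m : ℕ} {H : Fin m → Type*} [∀ i, NormedAddCommGroup (H i)]
    [∀ i, InnerProductSpace ℝ (H i)] [∀ i, CompleteSpace (H i)]
    (G : ∀ i, H0 →L[ℝ] H i)

lemma phi_eq (z xn yn : H0) (x y w : ∀ i, H i) :
    (∑ i, ⟪G i z - x i, y i - w i⟫_ℝ)
      + ⟪z - xn, yn - (-∑ i, ContinuousLinearMap.adjoint (G i) (w i))⟫_ℝ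
    = ⟪z, (∑ i, ContinuousLinearMap.adjoint (G i) (y i)) + yn⟫_ℝ
      + (∑ i, ⟪w i, x i - G i xn⟫_ℝ) - (∑ i, ⟪x i, y i⟫_ℝ) - ⟪xn, yn⟫_ℝ := by
  simp only [sub_neg_eq_add, inner_sub_left, inner_add_right, inner_sum, inner_sub_right,
    ContinuousLinearMap.adjoint_inner_right, Finset.sum_sub_distrib, map_sub]
  simp only [real_inner_comm]
  ring

lemma cluster_eq (Z xn yn : H0) (x y W : ∀ i, H i) :
    (∑ i, ⟪x i - G i Z, y i - W i⟫_ℝ)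
      + ⟪xn - Z, yn - (-∑ i, ContinuousLinearMap.adjoint (G i) (W i))⟫_ℝ
    = (∑ i, ⟪y i - W i, x i - G i xn⟫_ℝ)
      + ⟪xn - Z, (∑ i, ContinuousLinearMap.adjoint (G i) (y i)) + yn⟫_ℝ := by
  simp only [sub_neg_eq_add, inner_sub_left, inner_add_right, inner_sum, inner_sub_right,
    ContinuousLinearMap.adjoint_inner_right, Finset.sum_sub_distrib, map_sub]
  simp only [real_inner_comm]
  ring

lemma fejer_eq {γ : ℝ} (hγ : 0 < γ) (τ : ℝ) (z zs v : H0) (w ws u : ∀ i, H i) :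
    γ * ‖z - (γ⁻¹ * τ) • v - zs‖ ^ 2 + ∑ i, ‖w i - τ • u i - ws i‖ ^ 2
    = γ * ‖z - zs‖ ^ 2 + ∑ i, ‖w i - ws i‖ ^ 2
      - 2 * τ * (⟪z - zs, v⟫_ℝ + ∑ i, ⟪w i - ws i, u i⟫_ℝ)
      + τ ^ 2 * ((∑ i, ‖u i‖ ^ 2) + γ⁻¹ * ‖v‖ ^ 2) := by
  have h1 : ‖z - (γ⁻¹ * τ) • v - zs‖ ^ 2 = ‖z - zs‖ ^ 2 - 2 * (γ⁻¹ * τ) * ⟪z - zs, v⟫_ℝ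
      + (γ⁻¹ * τ) ^ 2 * ‖v‖ ^ 2 := by
    rw [sub_right_comm, norm_sub_sq_real, norm_smul, inner_smul_right, mul_pow,
      Real.norm_eq_abs, sq_abs]; ring
  have h2 : ∀ i, ‖w i - τ • u i - ws i‖ ^ 2 = ‖w i - ws i‖ ^ 2 - 2 * τ * ⟪w i - ws i, u i⟫_ℝ
      + τ ^ 2 * ‖u i‖ ^ 2 := fun i => by
    rw [sub_right_comm, norm_sub_sq_real, norm_smul, inner_smul_right, mul_pow,
      Real.norm_eq_abs, sq_abs]; ring
  rw [h1]
  simp only [h2, Finset.sum_add_distrib, Finset.sum_sub_distrib, ← Finset.mul_sum]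
  field_simp
  ring

end alg

lemma antitone_lim {D : ℕ → ℝ} (h0 : ∀ k, 0 ≤ D k) (h : ∀ k ≥ 1, D (k+1) ≤ D k) :
    ∃ l, Tendsto D atTop (𝓝 l) := by
  have ha : Antitone (fun k => D (k+1)) := antitone_nat_of_succ_le fun k => h (k+1) (by omega)
  have := tendsto_atTop_ciInf ha ⟨0, by rintro _ ⟨k, rfl⟩; exact h0 _⟩
  exact ⟨_, (tendsto_add_atTop_iff_nat 1).1 this⟩

lemma tmono {E : Type*} [NormedAddCommGroup E] [InnerProductSpace ℝ E] {a b p q s t : E} (h1 : 0 ≤ ⟪a - b, s - t⟫_ℝ)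
    (h2 : 0 ≤ ⟪p - q, s - t⟫_ℝ) : ⟪t - s, (a + p) - (b + q)⟫_ℝ ≤ 0 := by
  have : ⟪t - s, (a + p) - (b + q)⟫_ℝ = -(⟪a - b, s - t⟫_ℝ + ⟪p - q, s - t⟫_ℝ) := by
    rw [← inner_add_left, real_inner_comm, ← inner_neg_right]
    congr 1 <;> abel
  linarith

lemma sq_norm_tendsto {E : Type*} [NormedAddCommGroup E] {f : ℕ → E} {g : ℕ → ℝ}
    (hg : Tendsto g atTop (𝓝 0)) {c : ℝ} (hc : 0 < c) (h : ∀ k ≥ 1, c * ‖f k‖ ^ 2 ≤ g k) :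
    Tendsto f atTop (𝓝 0) := by
  rw [tendsto_zero_iff_norm_tendsto_zero]
  have h1 : Tendsto (fun k => ‖f k‖ ^ 2) atTop (𝓝 0) := by
    refine squeeze_zero' (Eventually.of_forall fun k => sq_nonneg _) (g := fun k => c⁻¹ * g k) ?_
      (by simpa using hg.const_mul c⁻¹)
    filter_upwards [eventually_ge_atTop 1] with k hk
    rw [← div_eq_inv_mul, le_div_iff₀ hc]; linarith [h k hk]
  simpa [Real.sqrt_sq] using h1.sqrt


lemma clm_bound {E F : Type*} [NormedAddCommGroup E] [NormedSpace ℝ E]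
    [NormedAddCommGroup F] [NormedSpace ℝ F] (T : E →L[ℝ] F) (f : ℕ → E)
    (hf : ∃ C, ∀ k ≥ 1, ‖f k‖ ≤ C) : ∃ C, ∀ k ≥ 1, ‖T (f k)‖ ≤ C := by
  obtain ⟨C, hC⟩ := hf
  exact ⟨‖T‖ * C, fun k hk => (T.le_opNorm _).trans
    (mul_le_mul_of_nonneg_left (hC k hk) (norm_nonneg _))⟩

lemma sub_bound {E : Type*} [NormedAddCommGroup E] (f g : ℕ → E)
    (hf : ∃ C, ∀ k ≥ 1, ‖f k‖ ≤ C) (hg : ∃ C, ∀ k ≥ 1, ‖g k‖ ≤ C) :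
    ∃ C, ∀ᶠ k in atTop, ‖f k - g k‖ ≤ C := by
  obtain ⟨C, hC⟩ := hf
  obtain ⟨D, hD⟩ := hg
  refine ⟨C + D, ?_⟩
  filter_upwards [eventually_ge_atTop 1] with k hk
  exact (norm_sub_le _ _).trans (add_le_add (hC k hk) (hD k hk))

lemma ev_bound {E : Type*} [NormedAddCommGroup E] {l : Filter ℕ} (h : ∀ᶠ k in l, 1 ≤ k)
    {f : ℕ → E} (hf : ∃ C, ∀ k ≥ 1, ‖f k‖ ≤ C) : ∃ C, ∀ᶠ k in l, ‖f k‖ ≤ C := by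
  obtain ⟨C, hC⟩ := hf
  exact ⟨C, h.mono fun k hk => hC k hk⟩

lemma ev_bound_sub {E : Type*} [NormedAddCommGroup E] {l : Filter ℕ}
    {f : ℕ → E} (hf : ∃ C, ∀ᶠ k in l, ‖f k‖ ≤ C) (p : E) : ∃ C, ∀ᶠ k in l, ‖f k - p‖ ≤ C := by
  obtain ⟨C, hC⟩ := hf
  exact ⟨C + ‖p‖, hC.mono fun k hk => (norm_sub_le _ _).trans (by linarith)⟩

lemma weak_congr {E : Type*} [NormedAddCommGroup E] [InnerProductSpace ℝ E] {l : Filter ℕ}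
    {f g : ℕ → E} {p : E} (h : Tendsto (fun k => f k - g k) l (𝓝 0))
    (hg : ∀ q, Tendsto (fun k => ⟪g k, q⟫_ℝ) l (𝓝 ⟪p, q⟫_ℝ)) (q : E) :
    Tendsto (fun k => ⟪f k, q⟫_ℝ) l (𝓝 ⟪p, q⟫_ℝ) := by
  have h1 := (h.inner (tendsto_const_nhds (x := q) (f := l))).add (hg q)
  simpa [inner_sub_left] using h1

lemma block_id {E : Type*} [NormedAddCommGroup E] [InnerProductSpace ℝ E] {ρ α : ℝ} (hρ : 0 < ρ)
    (x t s : E) : ρ⁻¹ * ⟪x - t, α • (x - t) + ρ • s⟫_ℝ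
      = ρ⁻¹ * α * ‖x - t‖ ^ 2 - ⟪t - x, s⟫_ℝ := by
  rw [inner_add_right, inner_smul_right, inner_smul_right, real_inner_self_eq_norm_sq,
    ← neg_sub x t, inner_neg_left]
  field_simp
  ring

end OFS
open OFS Filter Topology


/-- main convergence theorem for one-forward-step projective splitting with
fixed stepsizes, assuming the algorithm never terminates, i.e. `π_k > 0` for all `k ≥ 1`.
The spaces `H₁, …, H_{n-1}` are indexed by `Fin m` with `m = n - 1`, `H_n = H₀`, and
`G_n = I`.  The operators with index `n` carry the suffix `n` (e.g. `An`, `Bn`, `xn`).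
`Tᵢ = Aᵢ + Bᵢ` where each `Aᵢ` is maximal monotone and each `Bᵢ` is everywhere defined and
either `Lᵢ⁻¹`-cocoercive with `Lᵢ > 0` and `ρᵢ ≤ 2(1-αᵢ)/Lᵢ`, or constant.  The iterates
follow the one-forward-step update and the halfspace projection update; the conclusion is
weak convergence of `(z^k, w^k)` to a point of the extended solution set `S`, together
with the weak convergence of `xᵢ^k, yᵢ^k, x_n^k, y_n^k` to the corresponding limits. -/
theorem one_forward_step_projective_splitting_weak_convergence
    {H0 : Type*} [NormedAddCommGroup H0] [InnerProductSpace ℝ H0] [CompleteSpace H0]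
    {m : ℕ} {H : Fin m → Type*} [∀ i, NormedAddCommGroup (H i)]
    [∀ i, InnerProductSpace ℝ (H i)] [∀ i, CompleteSpace (H i)]
    (G : ∀ i, H0 →L[ℝ] H i)
    (A : ∀ i, H i → Set (H i)) (An : H0 → Set H0)
    (B : ∀ i, H i → H i) (Bn : H0 → H0)
    -- each Aᵢ is maximal monotone
    (hAmono : ∀ i, ∀ x y a b, a ∈ A i x → b ∈ A i y → 0 ≤ ⟪a - b, x - y⟫_ℝ)
    (hAmax : ∀ i, ∀ x u, (∀ y v, v ∈ A i y → 0 ≤ ⟪u - v, x - y⟫_ℝ) → u ∈ A i x)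
    (hAnmono : ∀ x y a b, a ∈ An x → b ∈ An y → 0 ≤ ⟪a - b, x - y⟫_ℝ)
    (hAnmax : ∀ x u, (∀ y v, v ∈ An y → 0 ≤ ⟪u - v, x - y⟫_ℝ) → u ∈ An x)
    -- parameters
    (γ : ℝ) (hγ : 0 < γ)
    (α : Fin m → ℝ) (αn : ℝ)
    (hα0 : ∀ i, 0 < α i) (hα1 : ∀ i, α i ≤ 1) (hαn0 : 0 < αn) (hαn1 : αn ≤ 1)
    (ρ : Fin m → ℝ) (ρn : ℝ) (hρ : ∀ i, 0 < ρ i) (hρn : 0 < ρn)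
    -- each Bᵢ is either Lᵢ⁻¹-cocoercive (Lᵢ > 0) with ρᵢ ≤ 2(1-αᵢ)/Lᵢ, or constant
    (hB : ∀ i, (∃ L : ℝ, 0 < L ∧
            (∀ x y, (1 / L) * ‖B i x - B i y‖ ^ 2 ≤ ⟪B i x - B i y, x - y⟫_ℝ) ∧
            ρ i ≤ 2 * (1 - α i) / L)
          ∨ (∃ v, ∀ x, B i x = v))
    (hBn : (∃ L : ℝ, 0 < L ∧
            (∀ x y, (1 / L) * ‖Bn x - Bn y‖ ^ 2 ≤ ⟪Bn x - Bn y, x - y⟫_ℝ) ∧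
            ρn ≤ 2 * (1 - αn) / L)
          ∨ (∃ v, ∀ x, Bn x = v))
    -- the extended solution set S is nonempty
    (hS : ∃ (zs : H0) (ws : ∀ i, H i),
        (∀ i, ∃ a ∈ A i (G i zs), ws i = a + B i (G i zs)) ∧
        (∃ a ∈ An zs, -∑ i, ContinuousLinearMap.adjoint (G i) (ws i) = a + Bn zs))
    -- iterates
    (z : ℕ → H0) (w : ℕ → ∀ i, H i)
    (x : ℕ → ∀ i, H i) (xn : ℕ → H0)
    (a : ℕ → ∀ i, H i) (an : ℕ → H0)
    (y : ℕ → ∀ i, H i) (yn : ℕ → H0)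
    (u : ℕ → ∀ i, H i) (v : ℕ → H0)
    (π τ φ : ℕ → ℝ)
    -- the one-forward-step update for i = 1, …, n-1
    (ha : ∀ k ≥ 1, ∀ i, a k i ∈ A i (x k i))
    (hx : ∀ k ≥ 1, ∀ i, x k i + ρ i • a k i
        = (1 - α i) • x (k - 1) i + α i • G i (z k) - ρ i • (B i (x (k - 1) i) - w k i))
    (hy : ∀ k ≥ 1, ∀ i, y k i = a k i + B i (x k i))
    -- the one-forward-step update for i = n (G_n = I, w_n^k = -∑ᵢ Gᵢ* wᵢ^k)
    (han : ∀ k ≥ 1, an k ∈ An (xn k))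
    (hxn : ∀ k ≥ 1, xn k + ρn • an k
        = (1 - αn) • xn (k - 1) + αn • z k
          - ρn • (Bn (xn (k - 1)) - (-∑ i, ContinuousLinearMap.adjoint (G i) (w k i))))
    (hyn : ∀ k ≥ 1, yn k = an k + Bn (xn k))
    -- the projection update
    (hu : ∀ k ≥ 1, ∀ i, u k i = x k i - G i (xn k))
    (hv : ∀ k ≥ 1, v k = (∑ i, ContinuousLinearMap.adjoint (G i) (y k i)) + yn k)
    (hπ : ∀ k ≥ 1, π k = (∑ i, ‖u k i‖ ^ 2) + γ⁻¹ * ‖v k‖ ^ 2)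
    (hπpos : ∀ k ≥ 1, 0 < π k)
    (hφ : ∀ k ≥ 1, φ k = (∑ i, ⟪G i (z k) - x k i, y k i - w k i⟫_ℝ)
        + ⟪z k - xn k, yn k - (-∑ i, ContinuousLinearMap.adjoint (G i) (w k i))⟫_ℝ)
    (hτ : ∀ k ≥ 1, τ k = max 0 (φ k) / π k)
    (hznext : ∀ k ≥ 1, z (k + 1) = z k - (γ⁻¹ * τ k) • v k)
    (hwnext : ∀ k ≥ 1, ∀ i, w (k + 1) i = w k i - τ k • u k i) :
    ∃ (zbar : H0) (wbar : ∀ i, H i),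
      -- (zbar, wbar) ∈ S
      ((∀ i, ∃ a ∈ A i (G i zbar), wbar i = a + B i (G i zbar)) ∧
        (∃ a ∈ An zbar, -∑ i, ContinuousLinearMap.adjoint (G i) (wbar i) = a + Bn zbar)) ∧
      -- (z^k, w^k) ⇀ (zbar, wbar) in the product space
      (∀ (q0 : H0) (qw : ∀ i, H i),
        Filter.Tendsto (fun k => ⟪z k, q0⟫_ℝ + ∑ i, ⟪w k i, qw i⟫_ℝ) Filter.atTop
          (nhds (⟪zbar, q0⟫_ℝ + ∑ i, ⟪wbar i, qw i⟫_ℝ))) ∧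
      -- xᵢ^k ⇀ Gᵢ zbar and yᵢ^k ⇀ wbarᵢ for i = 1, …, n-1
      (∀ i, ∀ q : H i, Filter.Tendsto (fun k => ⟪x k i, q⟫_ℝ) Filter.atTop
          (nhds ⟪G i zbar, q⟫_ℝ)) ∧
      (∀ i, ∀ q : H i, Filter.Tendsto (fun k => ⟪y k i, q⟫_ℝ) Filter.atTop
          (nhds ⟪wbar i, q⟫_ℝ)) ∧
      -- x_n^k ⇀ zbar and y_n^k ⇀ -∑ᵢ Gᵢ* wbarᵢ
      (∀ q : H0, Filter.Tendsto (fun k => ⟪xn k, q⟫_ℝ) Filter.atTop (nhds ⟪zbar, q⟫_ℝ)) ∧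
      (∀ q : H0, Filter.Tendsto (fun k => ⟪yn k, q⟫_ℝ) Filter.atTop
          (nhds ⟪-∑ i, ContinuousLinearMap.adjoint (G i) (wbar i), q⟫_ℝ)) := by
  -- the dual variable of the last block
  set wn : ℕ → H0 := fun k => -∑ i, ContinuousLinearMap.adjoint (G i) (w k i) with hwn
  choose c hc hBc using fun i => coco (hα1 i) (hB i)
  obtain ⟨cn, hcn, hBcn⟩ := coco hαn1 hBn
  have hBpos : ∀ i p q, 0 ≤ ⟪B i p - B i q, p - q⟫_ℝ := fun i p q =>
    le_trans (mul_nonneg (hc i).le (sq_nonneg _)) (hBc i p q).1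
  have hBnpos : ∀ p q, 0 ≤ ⟪Bn p - Bn q, p - q⟫_ℝ := fun p q =>
    le_trans (mul_nonneg hcn.le (sq_nonneg _)) (hBcn p q).1
  have hτ0 : ∀ k ≥ 1, 0 ≤ τ k := fun k hk => by
    rw [hτ k hk]; exact div_nonneg (le_max_left _ _) (hπpos k hk).le
  have hτπ : ∀ k ≥ 1, τ k * π k = max 0 (φ k) := fun k hk => by
    rw [hτ k hk]; exact div_mul_cancel₀ _ (hπpos k hk).ne'
  have hτφ : ∀ k ≥ 1, τ k * φ k = τ k ^ 2 * π k := fun k hk => by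
    rw [pow_two, mul_assoc, hτπ k hk]
    rcases le_total (φ k) 0 with h | h
    · rw [max_eq_left h, hτ k hk, max_eq_left h]; simp
    · rw [max_eq_right h]
  -- Fejer monotonicity
  have fejer : ∀ (zs : H0) (ws : ∀ i, H i),
      (∀ i, ∃ a ∈ A i (G i zs), ws i = a + B i (G i zs)) →
      (∃ a ∈ An zs, -∑ i, ContinuousLinearMap.adjoint (G i) (ws i) = a + Bn zs) →
      ∀ k ≥ 1, γ * ‖z (k+1) - zs‖ ^ 2 + ∑ i, ‖w (k+1) i - ws i‖ ^ 2 ≤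
        γ * ‖z k - zs‖ ^ 2 + ∑ i, ‖w k i - ws i‖ ^ 2 - τ k ^ 2 * π k := by
    intro zs ws h1 h2 k hk
    have hneg : (∑ i, ⟪G i zs - x k i, y k i - ws i⟫_ℝ)
        + ⟪zs - xn k, yn k - (-∑ i, ContinuousLinearMap.adjoint (G i) (ws i))⟫_ℝ ≤ 0 := by
      apply add_nonpos
      · apply Finset.sum_nonpos
        intro i _
        obtain ⟨b, hb, hb'⟩ := h1 i
        rw [hb', hy k hk i]
        exact tmono (hAmono i _ _ _ _ (ha k hk i) hb) (hBpos i _ _)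
      · obtain ⟨b, hb, hb'⟩ := h2
        rw [hb', hyn k hk]
        exact tmono (hAnmono _ _ _ _ (han k hk) hb) (hBnpos _ _)
    have e1 := hφ k hk
    rw [phi_eq, ← hv k hk] at e1
    rw [phi_eq, ← hv k hk] at hneg
    have e2 : φ k ≤ ⟪z k - zs, v k⟫_ℝ + ∑ i, ⟪w k i - ws i, u k i⟫_ℝ := by
      simp only [inner_sub_left, Finset.sum_sub_distrib, hu k hk]
      linarith
    have e3 := fejer_eq hγ (τ k) (z k) zs (v k) (w k) ws (u k)
    rw [← hπ k hk] at e3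
    rw [hznext k hk]
    simp only [hwnext k hk]
    rw [e3]
    have e4 := mul_le_mul_of_nonneg_left e2 (hτ0 k hk)
    have e5 := hτφ k hk
    linarith
  have hstep0 : ∀ k ≥ 1, 0 ≤ τ k ^ 2 * π k := fun k hk =>
    mul_nonneg (sq_nonneg _) (hπpos k hk).le
  have hDlim : ∀ (zs : H0) (ws : ∀ i, H i),
      (∀ i, ∃ a ∈ A i (G i zs), ws i = a + B i (G i zs)) →
      (∃ a ∈ An zs, -∑ i, ContinuousLinearMap.adjoint (G i) (ws i) = a + Bn zs) →
      ∃ l, Tendsto (fun k => γ * ‖z k - zs‖ ^ 2 + ∑ i, ‖w k i - ws i‖ ^ 2) atTop (𝓝 l) := by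
    intro zs ws h1 h2
    refine antitone_lim (fun k => by positivity) fun k hk => ?_
    linarith [fejer zs ws h1 h2 k hk, hstep0 k hk]
  obtain ⟨zs, ws, hS1, hS2⟩ := hS
  -- steps vanish
  have hstep : Tendsto (fun k => τ k ^ 2 * π k) atTop (𝓝 0) := by
    obtain ⟨l, hl⟩ := hDlim zs ws hS1 hS2
    have h1 := hl.sub ((tendsto_add_atTop_iff_nat 1).2 hl)
    rw [sub_self] at h1
    refine squeeze_zero' ?_ ?_ h1
    · filter_upwards [eventually_ge_atTop 1] with k hk using hstep0 k hk
    · filter_upwards [eventually_ge_atTop 1] with k hk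
      linarith [fejer zs ws hS1 hS2 k hk]
  have hdz : Tendsto (fun k => z (k+1) - z k) atTop (𝓝 0) := by
    refine sq_norm_tendsto hstep hγ fun k hk => ?_
    rw [hznext k hk, hπ k hk]
    have e : z k - (γ⁻¹ * τ k) • v k - z k = -((γ⁻¹ * τ k) • v k) := by abel
    rw [e, norm_neg, norm_smul, mul_pow, Real.norm_eq_abs, sq_abs, mul_add]
    have h1 : γ * ((γ⁻¹ * τ k) ^ 2 * ‖v k‖ ^ 2) = τ k ^ 2 * (γ⁻¹ * ‖v k‖ ^ 2) := by
      field_simp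
    have h2 : 0 ≤ τ k ^ 2 * ∑ i, ‖u k i‖ ^ 2 := by positivity
    linarith
  have hdw : ∀ i, Tendsto (fun k => w (k+1) i - w k i) atTop (𝓝 0) := by
    intro i
    refine sq_norm_tendsto hstep one_pos fun k hk => ?_
    rw [hwnext k hk, hπ k hk]
    have e : w k i - τ k • u k i - w k i = -(τ k • u k i) := by abel
    rw [e, norm_neg, norm_smul, mul_pow, Real.norm_eq_abs, sq_abs, mul_add, one_mul]
    have h1 : 0 ≤ τ k ^ 2 * (γ⁻¹ * ‖v k‖ ^ 2) := by positivity
    have h2 : ‖u k i‖ ^ 2 ≤ ∑ i, ‖u k i‖ ^ 2 :=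
      Finset.single_le_sum (f := fun i => ‖u k i‖ ^ 2) (fun _ _ => sq_nonneg _) (Finset.mem_univ i)
    have h3 := mul_le_mul_of_nonneg_left h2 (sq_nonneg (τ k))
    linarith
  have hdt : ∀ i, Tendsto (fun k => G i (z (k+1)) - G i (z k)) atTop (𝓝 0) := by
    intro i
    have := ((G i).continuous.tendsto 0).comp hdz
    simpa [Function.comp_def] using this
  have hdwn : Tendsto (fun k => wn (k+1) - wn k) atTop (𝓝 0) := by
    have h1 : Tendsto (fun k => ∑ i, ContinuousLinearMap.adjoint (G i) (w (k+1) i - w k i)) atTop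
        (𝓝 (∑ i : Fin m, (0 : H0))) := by
      refine tendsto_finsetSum _ fun i _ => ?_
      have := ((ContinuousLinearMap.adjoint (G i)).continuous.tendsto 0).comp (hdw i)
      simpa [Function.comp_def] using this
    have h2 := h1.neg
    simp only [Finset.sum_const_zero, neg_zero] at h2
    refine h2.congr fun k => ?_
    simp only [hwn, map_sub, Finset.sum_sub_distrib]
    abel
  -- boundedness
  have hDb : ∀ k ≥ 1, γ * ‖z k - zs‖ ^ 2 + ∑ i, ‖w k i - ws i‖ ^ 2 ≤
      γ * ‖z 1 - zs‖ ^ 2 + ∑ i, ‖w 1 i - ws i‖ ^ 2 := by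
    intro k hk
    induction k, hk using Nat.le_induction with
    | base => exact le_rfl
    | succ k hk ih => linarith [fejer zs ws hS1 hS2 k hk, hstep0 k hk]
  set D1 := γ * ‖z 1 - zs‖ ^ 2 + ∑ i, ‖w 1 i - ws i‖ ^ 2 with hD1
  have hzb : ∃ C, ∀ k ≥ 1, ‖z k‖ ≤ C := by
    refine ⟨‖zs‖ + Real.sqrt (γ⁻¹ * D1), fun k hk => ?_⟩
    have h1 : ‖z k - zs‖ ≤ Real.sqrt (γ⁻¹ * D1) := by
      apply Real.le_sqrt_of_sq_le
      rw [← div_eq_inv_mul, le_div_iff₀ hγ]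
      have : 0 ≤ ∑ i, ‖w k i - ws i‖ ^ 2 := by positivity
      linarith [hDb k hk]
    linarith [norm_le_norm_add_norm_sub' (z k) zs]
  have hwb : ∀ i, ∃ C, ∀ k ≥ 1, ‖w k i‖ ≤ C := by
    intro i
    refine ⟨‖ws i‖ + Real.sqrt D1, fun k hk => ?_⟩
    have h1 : ‖w k i - ws i‖ ≤ Real.sqrt D1 := by
      apply Real.le_sqrt_of_sq_le
      have h2 : ‖w k i - ws i‖ ^ 2 ≤ ∑ i, ‖w k i - ws i‖ ^ 2 :=
        Finset.single_le_sum (f := fun i => ‖w k i - ws i‖ ^ 2) (fun _ _ => sq_nonneg _)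
          (Finset.mem_univ i)
      have : 0 ≤ γ * ‖z k - zs‖ ^ 2 := by positivity
      linarith [hDb k hk]
    linarith [norm_le_norm_add_norm_sub' (w k i) (ws i)]
  have htb : ∀ i, ∃ C, ∀ k ≥ 1, ‖G i (z k)‖ ≤ C := fun i => clm_bound (G i) z hzb
  have hGwb : ∀ (f : ℕ → ∀ i, H i), (∀ i, ∃ C, ∀ k ≥ 1, ‖f k i‖ ≤ C) →
      ∃ C, ∀ k ≥ 1, ‖∑ i, ContinuousLinearMap.adjoint (G i) (f k i)‖ ≤ C := by
    intro f hf
    choose C hC using fun i => clm_bound (ContinuousLinearMap.adjoint (G i)) (fun k => f k i) (hf i)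
    exact ⟨∑ i, C i, fun k hk => (norm_sum_le _ _).trans (Finset.sum_le_sum fun i _ => hC i k hk)⟩
  have hwnb : ∃ C, ∀ k ≥ 1, ‖wn k‖ ≤ C := by
    obtain ⟨C, hC⟩ := hGwb w hwb
    exact ⟨C, fun k hk => by rw [hwn]; simpa using hC k hk⟩
  have hxyb : ∀ i, (∃ C, ∀ k ≥ 1, ‖x k i‖ ≤ C) ∧ (∃ C, ∀ k ≥ 1, ‖y k i‖ ≤ C) := by
    intro i
    obtain ⟨b, hb, -⟩ := hS1 i
    exact block_bdd (hAmono i) (hα0 i) (hα1 i) (hρ i) (hc i) (hBc i) hb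
      (fun k hk => ha k hk i) (fun k hk => hx k hk i) (fun k hk => hy k hk i) (htb i) (hwb i)
  have hxynb : (∃ C, ∀ k ≥ 1, ‖xn k‖ ≤ C) ∧ (∃ C, ∀ k ≥ 1, ‖yn k‖ ≤ C) := by
    obtain ⟨b, hb, -⟩ := hS2
    exact block_bdd hAnmono hαn0 hαn1 hρn hcn hBcn hb han hxn hyn hzb hwnb
  have hr : ∀ i, Tendsto (fun k => α i • (x k i - G i (z k)) + ρ i • (y k i - w k i)) atTop
      (𝓝 0) := fun i =>
    block_r (hAmono i) (hα0 i) (hα1 i) (hρ i) (hBc i)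
      (fun k hk => ha k hk i) (fun k hk => hx k hk i) (fun k hk => hy k hk i) (hdt i) (hdw i)
  have hrn : Tendsto (fun k => αn • (xn k - z k) + ρn • (yn k - wn k)) atTop (𝓝 0) :=
    block_r hAnmono hαn0 hαn1 hρn hBcn han hxn hyn hdz hdwn
  -- π is bounded
  have hub : ∀ i, ∃ C, ∀ k ≥ 1, ‖u k i‖ ≤ C := by
    intro i
    obtain ⟨C, hC⟩ := (hxyb i).1
    obtain ⟨D, hD⟩ := clm_bound (G i) xn hxynb.1
    exact ⟨C + D, fun k hk => by
      rw [hu k hk]; exact (norm_sub_le _ _).trans (add_le_add (hC k hk) (hD k hk))⟩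
  have hvb : ∃ C, ∀ k ≥ 1, ‖v k‖ ≤ C := by
    obtain ⟨C, hC⟩ := hGwb y (fun i => (hxyb i).2)
    obtain ⟨D, hD⟩ := hxynb.2
    exact ⟨C + D, fun k hk => by
      rw [hv k hk]; exact (norm_add_le _ _).trans (add_le_add (hC k hk) (hD k hk))⟩
  obtain ⟨P, hP⟩ : ∃ P, ∀ k ≥ 1, π k ≤ P := by
    choose C hC using hub
    obtain ⟨D, hD⟩ := hvb
    refine ⟨(∑ i, C i ^ 2) + γ⁻¹ * D ^ 2, fun k hk => ?_⟩
    rw [hπ k hk]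
    gcongr with i
    · exact hC i k hk
    · exact hD k hk
  have hΦ : Tendsto (fun k => max 0 (φ k)) atTop (𝓝 0) := by
    have hP0 : 0 < P := (hπpos 1 le_rfl).trans_le (hP 1 le_rfl)
    refine sq_norm_tendsto hstep (inv_pos.2 hP0) fun k hk => ?_
    rw [Real.norm_eq_abs, sq_abs, ← hτπ k hk, ← div_eq_inv_mul, div_le_iff₀ hP0]
    have := mul_le_mul_of_nonneg_left (hP k hk) (hstep0 k hk)
    nlinarith
  -- the inner products with the residual vanish
  have hε : ∀ i, Tendsto (fun k => (ρ i)⁻¹ * ⟪x k i - G i (z k),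
      α i • (x k i - G i (z k)) + ρ i • (y k i - w k i)⟫_ℝ) atTop (𝓝 0) := fun i => by
    have := (inner_tendsto_zero (sub_bound (fun k => x k i) (fun k => G i (z k)) (hxyb i).1 (htb i))
      (hr i)).const_mul (ρ i)⁻¹
    simpa using this
  have hεn : Tendsto (fun k => ρn⁻¹ * ⟪xn k - z k,
      αn • (xn k - z k) + ρn • (yn k - wn k)⟫_ℝ) atTop (𝓝 0) := by
    have := (inner_tendsto_zero (sub_bound xn z hxynb.1 hzb) hrn).const_mul ρn⁻¹
    simpa using this
  have hbnd : Tendsto (fun k => max 0 (φ k) + ∑ i, (ρ i)⁻¹ * ⟪x k i - G i (z k),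
      α i • (x k i - G i (z k)) + ρ i • (y k i - w k i)⟫_ℝ + ρn⁻¹ * ⟪xn k - z k,
      αn • (xn k - z k) + ρn • (yn k - wn k)⟫_ℝ) atTop (𝓝 0) := by
    have := (hΦ.add (tendsto_finsetSum Finset.univ fun i _ => hε i)).add hεn
    simpa using this
  have hsum : ∀ k ≥ 1, (∑ i, (ρ i)⁻¹ * α i * ‖x k i - G i (z k)‖ ^ 2)
      + ρn⁻¹ * αn * ‖xn k - z k‖ ^ 2 ≤ max 0 (φ k) + ∑ i, (ρ i)⁻¹ * ⟪x k i - G i (z k),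
      α i • (x k i - G i (z k)) + ρ i • (y k i - w k i)⟫_ℝ + ρn⁻¹ * ⟪xn k - z k,
      αn • (xn k - z k) + ρn • (yn k - wn k)⟫_ℝ := by
    intro k hk
    have e1 : ∀ i, (ρ i)⁻¹ * ⟪x k i - G i (z k),
      α i • (x k i - G i (z k)) + ρ i • (y k i - w k i)⟫_ℝ
        = (ρ i)⁻¹ * α i * ‖x k i - G i (z k)‖ ^ 2 - ⟪G i (z k) - x k i, y k i - w k i⟫_ℝ :=
      fun i => block_id (hρ i) _ _ _
    have e2 : ρn⁻¹ * ⟪xn k - z k, αn • (xn k - z k) + ρn • (yn k - wn k)⟫_ℝ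
        = ρn⁻¹ * αn * ‖xn k - z k‖ ^ 2 - ⟪z k - xn k, yn k - wn k⟫_ℝ := block_id hρn _ _ _
    simp only [e1, Finset.sum_sub_distrib]
    rw [e2]
    have e3 := hφ k hk
    have e4 := le_max_right 0 (φ k)
    linarith
  have hxt : ∀ i, Tendsto (fun k => x k i - G i (z k)) atTop (𝓝 0) := by
    intro i
    refine sq_norm_tendsto hbnd (mul_pos (inv_pos.2 (hρ i)) (hα0 i)) fun k hk => ?_
    refine le_trans ?_ (hsum k hk)
    have h1 : (ρ i)⁻¹ * α i * ‖x k i - G i (z k)‖ ^ 2 ≤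
        ∑ i, (ρ i)⁻¹ * α i * ‖x k i - G i (z k)‖ ^ 2 :=
      Finset.single_le_sum (f := fun i => (ρ i)⁻¹ * α i * ‖x k i - G i (z k)‖ ^ 2)
        (fun j _ => mul_nonneg (mul_pos (inv_pos.2 (hρ j)) (hα0 j)).le (sq_nonneg _))
        (Finset.mem_univ i)
    have h2 : 0 ≤ ρn⁻¹ * αn * ‖xn k - z k‖ ^ 2 := by positivity
    linarith
  have hxtn : Tendsto (fun k => xn k - z k) atTop (𝓝 0) := by
    refine sq_norm_tendsto hbnd (mul_pos (inv_pos.2 hρn) hαn0) fun k hk => ?_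
    refine le_trans ?_ (hsum k hk)
    have h2 : 0 ≤ ∑ i, (ρ i)⁻¹ * α i * ‖x k i - G i (z k)‖ ^ 2 := Finset.sum_nonneg fun j _ =>
      mul_nonneg (mul_pos (inv_pos.2 (hρ j)) (hα0 j)).le (sq_nonneg _)
    linarith
  have hyw : ∀ i, Tendsto (fun k => y k i - w k i) atTop (𝓝 0) := by
    intro i
    have h1 := ((hr i).sub ((hxt i).const_smul (α i))).const_smul (ρ i)⁻¹
    simp only [smul_zero, sub_zero] at h1
    refine h1.congr fun k => ?_
    rw [add_sub_cancel_left, inv_smul_smul₀ (hρ i).ne']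
  have hywn : Tendsto (fun k => yn k - wn k) atTop (𝓝 0) := by
    have h1 := (hrn.sub (hxtn.const_smul αn)).const_smul ρn⁻¹
    simp only [smul_zero, sub_zero] at h1
    refine h1.congr fun k => ?_
    rw [add_sub_cancel_left, inv_smul_smul₀ hρn.ne']
  have hu0 : ∀ i, Tendsto (fun k => u k i) atTop (𝓝 0) := by
    intro i
    have h1 := ((G i).continuous.tendsto 0).comp hxtn
    rw [map_zero] at h1
    have h2 := (hxt i).sub h1
    rw [sub_zero] at h2
    refine h2.congr' ?_
    filter_upwards [eventually_ge_atTop 1] with k hk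
    rw [hu k hk]; simp
  have hv0 : Tendsto v atTop (𝓝 0) := by
    have h1 : Tendsto (fun k => ∑ i, ContinuousLinearMap.adjoint (G i) (y k i - w k i)) atTop
        (𝓝 (∑ i : Fin m, (0 : H0))) := by
      refine tendsto_finsetSum _ fun i _ => ?_
      have := ((ContinuousLinearMap.adjoint (G i)).continuous.tendsto 0).comp (hyw i)
      simpa [Function.comp_def] using this
    have h2 := h1.add hywn
    simp only [Finset.sum_const_zero, add_zero] at h2
    refine h2.congr' ?_
    filter_upwards [eventually_ge_atTop 1] with k hk
    rw [hv k hk]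
    simp only [hwn, map_sub, Finset.sum_sub_distrib]
    abel
  -- weak limits along ultrafilters lie in S
  have hcl : ∀ F : Ultrafilter ℕ, (F : Filter ℕ) ≤ atTop → ∃ (Z : H0) (W : ∀ i, H i),
      (∀ q, Tendsto (fun k => ⟪z k, q⟫_ℝ) F (𝓝 ⟪Z, q⟫_ℝ)) ∧
      (∀ i q, Tendsto (fun k => ⟪w k i, q⟫_ℝ) F (𝓝 ⟪W i, q⟫_ℝ)) ∧
      (∀ i q, Tendsto (fun k => ⟪x k i, q⟫_ℝ) F (𝓝 ⟪G i Z, q⟫_ℝ)) ∧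
      (∀ i q, Tendsto (fun k => ⟪y k i, q⟫_ℝ) F (𝓝 ⟪W i, q⟫_ℝ)) ∧
      (∀ q, Tendsto (fun k => ⟪xn k, q⟫_ℝ) F (𝓝 ⟪Z, q⟫_ℝ)) ∧
      (∀ q, Tendsto (fun k => ⟪yn k, q⟫_ℝ) F
        (𝓝 ⟪-∑ i, ContinuousLinearMap.adjoint (G i) (W i), q⟫_ℝ)) ∧
      (∀ i, ∃ a ∈ A i (G i Z), W i = a + B i (G i Z)) ∧
      (∃ a ∈ An Z, -∑ i, ContinuousLinearMap.adjoint (G i) (W i) = a + Bn Z) := by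
    intro F hF
    have ev1 : ∀ᶠ k in (F : Filter ℕ), 1 ≤ k := hF (eventually_ge_atTop 1)
    have hzF := ev_bound ev1 hzb
    obtain ⟨Z, hZ⟩ := weak_lim F hzF
    choose W hW using fun i => weak_lim F (ev_bound ev1 (hwb i))
    have hxw : ∀ i q, Tendsto (fun k => ⟪x k i, q⟫_ℝ) F (𝓝 ⟪G i Z, q⟫_ℝ) := by
      intro i
      refine weak_congr ((hxt i).mono_left hF) fun q => ?_
      have := hZ (ContinuousLinearMap.adjoint (G i) q)
      simpa only [ContinuousLinearMap.adjoint_inner_right] using this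
    have hyw' : ∀ i q, Tendsto (fun k => ⟪y k i, q⟫_ℝ) F (𝓝 ⟪W i, q⟫_ℝ) := fun i =>
      weak_congr ((hyw i).mono_left hF) (hW i)
    have hxnw : ∀ q, Tendsto (fun k => ⟪xn k, q⟫_ℝ) F (𝓝 ⟪Z, q⟫_ℝ) :=
      weak_congr (hxtn.mono_left hF) hZ
    have hynw : ∀ q, Tendsto (fun k => ⟪yn k, q⟫_ℝ) F
        (𝓝 ⟪-∑ i, ContinuousLinearMap.adjoint (G i) (W i), q⟫_ℝ) := by
      refine weak_congr (hywn.mono_left hF) fun q => ?_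
      simp only [hwn, inner_neg_left, sum_inner, ContinuousLinearMap.adjoint_inner_left]
      exact (tendsto_finsetSum _ fun i _ => hW i (G i q)).neg
    choose l hl0 hl hlS using fun i => block_graph (hAmono i) (hAmax i) (hc i)
      (fun p q => (hBc i p q).1) F (ev1.mono fun k hk => ha k hk i)
      (ev1.mono fun k hk => hy k hk i) (ev_bound ev1 (hxyb i).1) (ev_bound ev1 (hxyb i).2)
      (hxw i) (hyw' i)
    obtain ⟨ln, hln0, hln, hlnS⟩ := block_graph hAnmono hAnmax hcn
      (fun p q => (hBcn p q).1) F (ev1.mono fun k hk => han k hk)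
      (ev1.mono fun k hk => hyn k hk) (ev_bound ev1 hxynb.1) (ev_bound ev1 hxynb.2)
      hxnw hynw
    have ht1 := (tendsto_finsetSum Finset.univ fun i _ => hl i).add hln
    have ht2 : Tendsto (fun k => (∑ i, ⟪y k i - W i, u k i⟫_ℝ) + ⟪xn k - Z, v k⟫_ℝ) F
        (𝓝 ((∑ i : Fin m, (0:ℝ)) + 0)) := by
      refine (tendsto_finsetSum _ fun i _ => ?_).add ?_
      · exact inner_tendsto_zero (ev_bound_sub (ev_bound ev1 (hxyb i).2) (W i))
          ((hu0 i).mono_left hF)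
      · exact inner_tendsto_zero (ev_bound_sub (ev_bound ev1 hxynb.1) Z) (hv0.mono_left hF)
    have hzero : (∑ i, l i) + ln = 0 := by
      have h3 := tendsto_nhds_unique_of_eventuallyEq ht1 ht2 (ev1.mono fun k hk => by
        simp only [hu k hk, hv k hk]
        exact cluster_eq G Z (xn k) (yn k) (x k) (y k) W)
      simpa using h3
    have hsl : 0 ≤ ∑ i, l i := Finset.sum_nonneg fun i _ => hl0 i
    have hlz : ∀ i, l i = 0 := fun i =>
      (Finset.sum_eq_zero_iff_of_nonneg (fun i _ => hl0 i)).1 (by linarith) i (Finset.mem_univ i)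
    exact ⟨Z, W, hZ, hW, hxw, hyw', hxnw, hynw, fun i => hlS i (hlz i), hlnS (by linarith)⟩
  -- uniqueness of the weak limits (Opial)
  obtain ⟨Z, W, hZ, hW, -, -, -, -, hZS, hWS⟩ := hcl (hyperfilter ℕ) Nat.hyperfilter_le_atTop
  have huniq : ∀ (F : Ultrafilter ℕ), (F : Filter ℕ) ≤ atTop → ∀ (Z' : H0) (W' : ∀ i, H i),
      (∀ q, Tendsto (fun k => ⟪z k, q⟫_ℝ) F (𝓝 ⟪Z', q⟫_ℝ)) →
      (∀ i q, Tendsto (fun k => ⟪w k i, q⟫_ℝ) F (𝓝 ⟪W' i, q⟫_ℝ)) →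
      (∀ i, ∃ a ∈ A i (G i Z'), W' i = a + B i (G i Z')) →
      (∃ a ∈ An Z', -∑ i, ContinuousLinearMap.adjoint (G i) (W' i) = a + Bn Z') →
      Z' = Z ∧ W' = W := by
    intro F hF Z' W' h1 h2 h3 h4
    obtain ⟨d, hd⟩ := hDlim Z W hZS hWS
    obtain ⟨d', hd'⟩ := hDlim Z' W' h3 h4
    -- the difference of the two distance functions is affine
    have hdiff : ∀ k, (γ * ‖z k - Z‖ ^ 2 + ∑ i, ‖w k i - W i‖ ^ 2)
        - (γ * ‖z k - Z'‖ ^ 2 + ∑ i, ‖w k i - W' i‖ ^ 2)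
        = 2 * (γ * ⟪z k, Z' - Z⟫_ℝ + ∑ i, ⟪w k i, W' i - W i⟫_ℝ)
          + (γ * (‖Z‖ ^ 2 - ‖Z'‖ ^ 2) + ∑ i, (‖W i‖ ^ 2 - ‖W' i‖ ^ 2)) := by
      intro k
      simp only [norm_sub_sq_real, inner_sub_right, Finset.sum_sub_distrib, Finset.sum_add_distrib,
        ← Finset.mul_sum]
      ring
    have hdd := hd.sub hd'
    simp only [hdiff] at hdd
    have hlimF : ∀ (F : Ultrafilter ℕ), ∀ (Z'' : H0) (W'' : ∀ i, H i),
      (∀ q, Tendsto (fun k => ⟪z k, q⟫_ℝ) F (𝓝 ⟪Z'', q⟫_ℝ)) →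
      (∀ i q, Tendsto (fun k => ⟪w k i, q⟫_ℝ) F (𝓝 ⟪W'' i, q⟫_ℝ)) →
      Tendsto (fun k => 2 * (γ * ⟪z k, Z' - Z⟫_ℝ + ∑ i, ⟪w k i, W' i - W i⟫_ℝ)
          + (γ * (‖Z‖ ^ 2 - ‖Z'‖ ^ 2) + ∑ i, (‖W i‖ ^ 2 - ‖W' i‖ ^ 2))) F
        (𝓝 (2 * (γ * ⟪Z'', Z' - Z⟫_ℝ + ∑ i, ⟪W'' i, W' i - W i⟫_ℝ)
          + (γ * (‖Z‖ ^ 2 - ‖Z'‖ ^ 2) + ∑ i, (‖W i‖ ^ 2 - ‖W' i‖ ^ 2)))) := by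
      intro F Z'' W'' h1 h2
      exact ((((h1 _).const_mul γ).add
        (tendsto_finsetSum _ fun i _ => h2 i _)).const_mul 2).add_const _
    have q1 := tendsto_nhds_unique (hlimF F Z' W' h1 h2) (hdd.mono_left hF)
    have q2 := tendsto_nhds_unique (hlimF _ Z W hZ hW) (hdd.mono_left Nat.hyperfilter_le_atTop)
    have q3 : γ * ‖Z' - Z‖ ^ 2 + ∑ i, ‖W' i - W i‖ ^ 2 = 0 := by
      simp only [← real_inner_self_eq_norm_sq]
      have e1 : ⟪Z' - Z, Z' - Z⟫_ℝ = ⟪Z', Z' - Z⟫_ℝ - ⟪Z, Z' - Z⟫_ℝ := inner_sub_left _ _ _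
      have e2 : ∑ i, ⟪W' i - W i, W' i - W i⟫_ℝ
          = ∑ i, ⟪W' i, W' i - W i⟫_ℝ - ∑ i, ⟪W i, W' i - W i⟫_ℝ := by
        rw [← Finset.sum_sub_distrib]
        exact Finset.sum_congr rfl fun i _ => inner_sub_left _ _ _
      rw [e1, e2]
      linarith
    have p1 : 0 ≤ γ * ‖Z' - Z‖ ^ 2 := by positivity
    have p2 : 0 ≤ ∑ i, ‖W' i - W i‖ ^ 2 := by positivity
    constructor
    · have : γ * ‖Z' - Z‖ ^ 2 = 0 := by linarith
      have h5 : ‖Z' - Z‖ = 0 := by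
        rcases mul_eq_zero.1 this with h | h
        · exact absurd h hγ.ne'
        · exact pow_eq_zero_iff (two_ne_zero) |>.1 h
      exact sub_eq_zero.1 (norm_eq_zero.1 h5)
    · funext i
      have h5 : ‖W' i - W i‖ ^ 2 = 0 :=
        (Finset.sum_eq_zero_iff_of_nonneg (fun i _ => sq_nonneg _)).1
          (by linarith : ∑ i, ‖W' i - W i‖ ^ 2 = 0) i (Finset.mem_univ i)
      exact sub_eq_zero.1 (norm_eq_zero.1 (pow_eq_zero_iff (two_ne_zero) |>.1 h5))
  have hall : ∀ F : Ultrafilter ℕ, (F : Filter ℕ) ≤ atTop →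
      (∀ q, Tendsto (fun k => ⟪z k, q⟫_ℝ) F (𝓝 ⟪Z, q⟫_ℝ)) ∧
      (∀ i q, Tendsto (fun k => ⟪w k i, q⟫_ℝ) F (𝓝 ⟪W i, q⟫_ℝ)) ∧
      (∀ i q, Tendsto (fun k => ⟪x k i, q⟫_ℝ) F (𝓝 ⟪G i Z, q⟫_ℝ)) ∧
      (∀ i q, Tendsto (fun k => ⟪y k i, q⟫_ℝ) F (𝓝 ⟪W i, q⟫_ℝ)) ∧
      (∀ q, Tendsto (fun k => ⟪xn k, q⟫_ℝ) F (𝓝 ⟪Z, q⟫_ℝ)) ∧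
      (∀ q, Tendsto (fun k => ⟪yn k, q⟫_ℝ) F
        (𝓝 ⟪-∑ i, ContinuousLinearMap.adjoint (G i) (W i), q⟫_ℝ)) := by
    intro F hF
    obtain ⟨Z', W', h1, h2, h3, h4, h5, h6, h7, h8⟩ := hcl F hF
    obtain ⟨rfl, rfl⟩ := huniq F hF Z' W' h1 h2 h7 h8
    exact ⟨h1, h2, h3, h4, h5, h6⟩
  refine ⟨Z, W, ⟨hZS, hWS⟩, fun q0 qw => ?_, fun i q => ?_, fun i q => ?_, fun q => ?_, fun q => ?_⟩
  · rw [tendsto_iff_ultrafilter]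
    intro F hF
    exact ((hall F hF).1 q0).add (tendsto_finsetSum _ fun i _ => (hall F hF).2.1 i (qw i))
  · rw [tendsto_iff_ultrafilter]
    exact fun F hF => (hall F hF).2.2.1 i q
  · rw [tendsto_iff_ultrafilter]
    exact fun F hF => (hall F hF).2.2.2.1 i q
  · rw [tendsto_iff_ultrafilter]
    exact fun F hF => (hall F hF).2.2.2.2.1 q
  · rw [tendsto_iff_ultrafilter]
    exact fun F hF => (hall F hF).2.2.2.2.2 q
end
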